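/- arXiv:1312.0655 — 2 statements merged into one kernel-verified Lean document; each statement's English description precedes it below -/
import Mathlib

section
/- Let ε > 0, Δ > 0 and let i ≥ 2 be an integer. For every μ_a ∈ 𝒫_i^{(b)} with density sequence (a_k), there exist an integer k* with 0 ≤ k* ≤ i−2 and a measure μ_b ∈ 𝒫_i^{(b)} with density sequence (b_k) such that b₀ = b₁ = ⋯ = b_{k*}, b₀ = e^ε · b_{i−1}, and V(μ_b) ≤ V(μ_a). (Lemma 6.) -/
open MeasureTheory Real Filter
open scoped ENNReal Topology

noncomputable section

/-- The ℓ¹ norm on ℝ². -/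
def l1 (x : ℝ × ℝ) : ℝ := |x.1| + |x.2|

/-- The ε-differential-privacy constraint on a measure on ℝ² with sensitivity Δ. -/
def DPC (ε Δ : ℝ) (μ : Measure (ℝ × ℝ)) : Prop :=
  ∀ S : Set (ℝ × ℝ), MeasurableSet S → ∀ t : ℝ × ℝ, l1 t ≤ Δ →
    μ S ≤ ENNReal.ofReal (Real.exp ε) * μ ((· + t) '' S)

/-- Expected ℓ¹ cost of a noise distribution. -/
def cost (μ : Measure (ℝ × ℝ)) : ℝ≥0∞ := ∫⁻ x, ENNReal.ofReal (l1 x) ∂μ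

/-- The index k of the ℓ¹ layer A_i(k) = {x : kΔ/i ≤ ‖x‖₁ < (k+1)Δ/i} containing x. -/
def layerIdx (Δ : ℝ) (i : ℕ) (x : ℝ × ℝ) : ℕ := ⌊l1 x * i / Δ⌋₊

/-- μ has a density w.r.t. Lebesgue measure which is constant on each ℓ¹ layer
A_i(k), with constant value a_k on A_i(k); (a_k) is the density sequence of μ. -/
def HasDensitySeq (Δ : ℝ) (i : ℕ) (μ : Measure (ℝ × ℝ)) (a : ℕ → ℝ≥0∞) : Prop :=
  μ = MeasureTheory.volume.withDensity (fun x => a (layerIdx Δ i x))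

/-- Membership in 𝒫: probability measures satisfying the ε-DP constraint. -/
def MemP (ε Δ : ℝ) (μ : Measure (ℝ × ℝ)) : Prop :=
  IsProbabilityMeasure μ ∧ DPC ε Δ μ

/-- Membership in 𝒫_{i,sym}: members of 𝒫 with layer-constant density. -/
def MemPsym (ε Δ : ℝ) (i : ℕ) (μ : Measure (ℝ × ℝ)) : Prop :=
  MemP ε Δ μ ∧ ∃ a : ℕ → ℝ≥0∞, HasDensitySeq Δ i μ a

/-- Membership in 𝒫_i^{(a)}: layer-constant density with nonincreasing density sequence. -/
def MemPa (ε Δ : ℝ) (i : ℕ) (μ : Measure (ℝ × ℝ)) : Prop :=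
  MemP ε Δ μ ∧ ∃ a : ℕ → ℝ≥0∞, HasDensitySeq Δ i μ a ∧ Antitone a

/-- Membership in 𝒫_i^{(b)}: additionally the density sequence decays geometrically,
a_k = e^ε · a_{k+i} for all k. -/
def MemPb (ε Δ : ℝ) (i : ℕ) (μ : Measure (ℝ × ℝ)) : Prop :=
  MemP ε Δ μ ∧ ∃ a : ℕ → ℝ≥0∞, HasDensitySeq Δ i μ a ∧ Antitone a ∧
    ∀ k : ℕ, a k = ENNReal.ofReal (Real.exp ε) * a (k + i)

/-- Membership in 𝒫_i^{(c)}: additionally a₀ = e^ε · a_{i−1} and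
a₀ = a₁ = ⋯ = a_k for some 0 ≤ k ≤ i−2. -/
def MemPc (ε Δ : ℝ) (i : ℕ) (μ : Measure (ℝ × ℝ)) : Prop :=
  MemP ε Δ μ ∧ ∃ a : ℕ → ℝ≥0∞, HasDensitySeq Δ i μ a ∧ Antitone a ∧
    (∀ k : ℕ, a k = ENNReal.ofReal (Real.exp ε) * a (k + i)) ∧
    a 0 = ENNReal.ofReal (Real.exp ε) * a (i - 1) ∧
    ∃ k : ℕ, k ≤ i - 2 ∧ ∀ j : ℕ, j ≤ k → a j = a 0

/-- Membership in 𝒫_i^{(d)}: members of 𝒫_i^{(c)} whose density sequence takes only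
the two values a₀ and a_{i−1} on each period: for some 1 ≤ k ≤ i−2, a_j = a₀ for
0 ≤ j < k and a_j = a_{i−1} for k < j ≤ i−1. -/
def MemPd (ε Δ : ℝ) (i : ℕ) (μ : Measure (ℝ × ℝ)) : Prop :=
  MemP ε Δ μ ∧ ∃ a : ℕ → ℝ≥0∞, HasDensitySeq Δ i μ a ∧ Antitone a ∧
    (∀ k : ℕ, a k = ENNReal.ofReal (Real.exp ε) * a (k + i)) ∧
    a 0 = ENNReal.ofReal (Real.exp ε) * a (i - 1) ∧
    (∃ k : ℕ, k ≤ i - 2 ∧ ∀ j : ℕ, j ≤ k → a j = a 0) ∧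
    ∃ k : ℕ, 1 ≤ k ∧ k ≤ i - 2 ∧ (∀ j : ℕ, j < k → a j = a 0) ∧
      ∀ j : ℕ, k < j → j ≤ i - 1 → a j = a (i - 1)

/-!
The head is made flat with `k* = 0`: the last value of each period of the density sequence is
lowered to the first value of the next period, and the result is renormalised. This moves mass off
the layers of index `≡ i - 1 (mod i)` only, so the cost does not increase provided that this residue
class has the largest cost per unit of mass.

For the class of `j`, let `U_j` be the mean and `v` the variance of a point chosen uniformly in the
norm interval of a layer of the class, itself chosen with geometric weights; `v` does not depend on
`j`. Lebesgue measure on `ℝ²` has density `4 * r` in `r = ‖x‖₁`, so the class has mass proportional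
to `U_j` and cost proportional to `U_j ^ 2 + v`. The ratios `U_j + v / U_j` for `j ≤ l = i - 1`
compare through `(U_l - U_j) * (U_j * U_l - v) ≥ 0`, where `v ≤ U_j * U_l` since `j + l + 1 ≥ i`.
-/

lemma l1_nonneg (x : ℝ × ℝ) : 0 ≤ l1 x := by unfold l1; positivity

lemma l1_add_le (x y : ℝ × ℝ) : l1 (x + y) ≤ l1 x + l1 y := by
  have h_fst := abs_add_le x.1 y.1
  have h_snd := abs_add_le x.2 y.2
  simp only [l1, Prod.fst_add, Prod.snd_add]
  linarith

@[fun_prop]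
lemma measurable_l1 : Measurable l1 := by unfold l1; fun_prop

lemma cost_eq_lintegral_pow_one (μ : Measure (ℝ × ℝ)) :
    cost μ = ∫⁻ x, ENNReal.ofReal (l1 x) ^ 1 ∂μ := by simp [cost]

lemma measure_univ_eq_lintegral_pow_zero (μ : Measure (ℝ × ℝ)) :
    μ Set.univ = ∫⁻ x, ENNReal.ofReal (l1 x) ^ 0 ∂μ := by simp

lemma cost_smul (c : ℝ≥0∞) (μ : Measure (ℝ × ℝ)) : cost (c • μ) = c * cost μ :=
  lintegral_smul_measure _ _

lemma DPC.smul {ε Δ : ℝ} {μ : Measure (ℝ × ℝ)} (h : DPC ε Δ μ) (c : ℝ≥0∞) :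
    DPC ε Δ (c • μ) := fun S hS t ht => by
  simp only [Measure.smul_apply, smul_eq_mul, mul_left_comm _ c]
  gcongr
  exact h S hS t ht

section PolarIntegration

lemma lintegral_comp_abs (f : ℝ → ℝ≥0∞) : ∫⁻ y, f |y| = 2 * ∫⁻ y in Set.Ioi 0, f y := by
  have h_pos : ∫⁻ y in Set.Ioi 0, f |y| = ∫⁻ y in Set.Ioi 0, f y :=
    setLIntegral_congr_fun measurableSet_Ioi fun y hy => by rw [abs_of_pos hy]
  have h_neg : ∫⁻ y in Set.Iic 0, f |y| = ∫⁻ y in Set.Ioi 0, f |y| := by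
    have h := (Measure.measurePreserving_neg (volume : Measure ℝ)).setLIntegral_comp_preimage_emb
      (MeasurableEquiv.neg ℝ).measurableEmbedding (fun y => f |y|) (Set.Ici 0)
    simp only [abs_neg, Set.neg_preimage, Set.neg_Ici, neg_zero] at h
    rw [h, setLIntegral_congr Ioi_ae_eq_Ici]
  rw [← lintegral_add_compl _ measurableSet_Ioi, Set.compl_Ioi, h_neg, h_pos, two_mul]

lemma lintegral_Ioi_lintegral_Ioi_add {f : ℝ → ℝ≥0∞} (hf : Measurable f) :
    ∫⁻ x in Set.Ioi (0 : ℝ), ∫⁻ y in Set.Ioi 0, f (x + y) =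
      ∫⁻ r in Set.Ioi 0, ENNReal.ofReal r * f r := by
  have h_shift : ∀ x ∈ Set.Ioi (0 : ℝ), ∫⁻ y in Set.Ioi 0, f (x + y) =
      ∫⁻ r in Set.Ioi 0, (Set.Iio r).indicator (fun _ => f r) x := fun x hx => by
    have h := (measurePreserving_add_left volume x).setLIntegral_comp_preimage_emb
      (measurableEmbedding_addLeft x) f (Set.Ioi x)
    simp only [Set.preimage_const_add_Ioi, sub_self] at h
    rw [h, ← Set.inter_eq_left.mpr (Set.Ioi_subset_Ioi (le_of_lt hx)),
      ← Measure.restrict_restrict measurableSet_Ioi, ← lintegral_indicator measurableSet_Ioi]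
    simp only [Set.indicator_apply, Set.mem_Ioi, Set.mem_Iio]
  have h_meas : Measurable fun p : ℝ × ℝ => (Set.Iio p.2).indicator (fun _ => f p.2) p.1 :=
    (hf.comp measurable_snd).indicator (measurableSet_lt measurable_fst measurable_snd)
  rw [setLIntegral_congr_fun measurableSet_Ioi h_shift,
    lintegral_lintegral_swap h_meas.aemeasurable]
  refine setLIntegral_congr_fun measurableSet_Ioi fun r _ => ?_
  rw [lintegral_indicator_const measurableSet_Iio, Measure.restrict_apply measurableSet_Iio,
    Set.inter_comm, Set.Ioi_inter_Iio, Real.volume_Ioo, sub_zero, mul_comm]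

theorem lintegral_comp_l1 {f : ℝ → ℝ≥0∞} (hf : Measurable f) :
    ∫⁻ x, f (l1 x) = 4 * ∫⁻ r in Set.Ioi 0, ENNReal.ofReal r * f r := by
  have h_inner (x : ℝ) : ∫⁻ y : ℝ, f (|x| + |y|) = 2 * ∫⁻ y in Set.Ioi 0, f (|x| + y) :=
    lintegral_comp_abs fun y => f (|x| + y)
  have h_outer := lintegral_comp_abs fun x => ∫⁻ y in Set.Ioi 0, f (x + y)
  unfold l1
  rw [Measure.volume_eq_prod, lintegral_prod _ (by fun_prop)]
  simp only [h_inner]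
  rw [lintegral_const_mul' _ _ (by norm_num), h_outer, lintegral_Ioi_lintegral_Ioi_add hf,
    ← mul_assoc]
  norm_num

lemma setLIntegral_comp_l1 {f : ℝ → ℝ≥0∞} (hf : Measurable f) {S : Set ℝ}
    (hS : MeasurableSet S) (hS_nonneg : S ⊆ Set.Ici 0) :
    ∫⁻ x in l1 ⁻¹' S, f (l1 x) = 4 * ∫⁻ r in S, ENNReal.ofReal r * f r := by
  rw [← lintegral_indicator (measurable_l1 hS)]
  refine (lintegral_comp_l1 (hf.indicator hS)).trans ?_
  simp only [← Set.indicator_mul_right S ENNReal.ofReal f]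
  rw [lintegral_indicator hS, Measure.restrict_congr_set Ioi_ae_eq_Ici,
    Measure.restrict_restrict hS, Set.inter_eq_left.mpr hS_nonneg]

end PolarIntegration

section Layers

variable {Δ : ℝ} {i : ℕ}

@[fun_prop]
lemma measurable_layerIdx : Measurable (layerIdx Δ i) := by unfold layerIdx; fun_prop

lemma preimage_layerIdx (hΔ : 0 < Δ) (hi : 0 < i) (k : ℕ) :
    layerIdx Δ i ⁻¹' {k} = l1 ⁻¹' Set.Ico (k * (Δ / i)) ((k + 1) * (Δ / i)) := by
  ext x
  have hx := l1_nonneg x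
  rw [Set.mem_preimage, Set.mem_singleton_iff, layerIdx, Nat.floor_eq_iff (by positivity),
    ← div_div_eq_mul_div, le_div_iff₀ (by positivity), div_lt_iff₀ (by positivity)]
  rfl

lemma layerIdx_add_le (hΔ : 0 < Δ) {t : ℝ × ℝ} (ht : l1 t ≤ Δ) (x : ℝ × ℝ) :
    layerIdx Δ i (x + t) ≤ layerIdx Δ i x + i := by
  have hx := l1_nonneg x
  unfold layerIdx
  rw [← Nat.floor_add_natCast (by positivity)]
  refine Nat.floor_le_floor ?_
  calc l1 (x + t) * i / Δ ≤ (l1 x + Δ) * i / Δ := by gcongr; linarith [l1_add_le x t]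
    _ = l1 x * i / Δ + i := by field_simp

/-- The `k`-dependent factor of the integral of `‖x‖₁ ^ p` over the `k`-th layer; the other factor
is `layerScale`. The cases of interest are the mass, `p = 0`, and the cost, `p = 1`. -/
def layerWeight (p k : ℕ) : ℝ := ((k : ℝ) + 1) ^ (p + 2) - (k : ℝ) ^ (p + 2)

/-- The factor common to the integrals of `‖x‖₁ ^ p` over all layers, split off because it cancels
when ratios of cost to mass are compared. -/
def layerScale (Δ : ℝ) (i p : ℕ) : ℝ≥0∞ := 4 * ENNReal.ofReal ((Δ / i) ^ (p + 2) / (p + 2))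

lemma layerWeight_nonneg (p k : ℕ) : 0 ≤ layerWeight p k :=
  sub_nonneg.mpr (by gcongr; linarith)

lemma setLIntegral_Ico_id_mul_pow {s t : ℝ} (hs : 0 ≤ s) (hst : s ≤ t) (p : ℕ) :
    ∫⁻ r in Set.Ico s t, ENNReal.ofReal r * ENNReal.ofReal r ^ p =
      ENNReal.ofReal ((t ^ (p + 2) - s ^ (p + 2)) / (p + 2)) := by
  have h_int : IntegrableOn (fun r : ℝ => r ^ (p + 1)) (Set.Ioc s t) :=
    (intervalIntegral.intervalIntegrable_pow (p + 1)).1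
  have h_nonneg : 0 ≤ᵐ[volume.restrict (Set.Ioc s t)] fun r : ℝ => r ^ (p + 1) := by
    filter_upwards [ae_restrict_mem measurableSet_Ioc] with r hr
    exact pow_nonneg (hs.trans hr.1.le) _
  have h_eval := ofReal_integral_eq_lintegral_ofReal h_int h_nonneg
  rw [← intervalIntegral.integral_of_le hst, integral_pow] at h_eval
  rw [setLIntegral_congr Ico_ae_eq_Ioc, setLIntegral_congr_fun measurableSet_Ioc
    (g := fun r => ENNReal.ofReal (r ^ (p + 1))) fun r hr => ?_, ← h_eval]
  · push_cast
    ring_nf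
  · simp only [← pow_succ', ENNReal.ofReal_pow (hs.trans hr.1.le)]

lemma setLIntegral_layer (hΔ : 0 < Δ) (hi : 0 < i) (p k : ℕ) :
    ∫⁻ x in layerIdx Δ i ⁻¹' {k}, ENNReal.ofReal (l1 x) ^ p =
      layerScale Δ i p * ENNReal.ofReal (layerWeight p k) := by
  have h_nonneg : 0 ≤ k * (Δ / i) := by positivity
  rw [preimage_layerIdx hΔ hi, setLIntegral_comp_l1 (f := fun r => ENNReal.ofReal r ^ p)
      (by fun_prop) measurableSet_Ico fun r hr => h_nonneg.trans hr.1,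
    setLIntegral_Ico_id_mul_pow h_nonneg (by gcongr; linarith), layerScale,
    mul_assoc, ← ENNReal.ofReal_mul (by positivity), layerWeight, mul_pow, mul_pow]
  congr 2
  ring

end Layers

section LayerMeasure

variable {Δ : ℝ} {i : ℕ} {a b : ℕ → ℝ≥0∞}

/-- The measure on `ℝ²` whose density sequence is `a`. -/
def layerMeasure (Δ : ℝ) (i : ℕ) (a : ℕ → ℝ≥0∞) : Measure (ℝ × ℝ) :=
  volume.withDensity fun x => a (layerIdx Δ i x)

lemma measurable_layerDensity (a : ℕ → ℝ≥0∞) : Measurable fun x => a (layerIdx Δ i x) :=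
  (measurable_of_countable a).comp measurable_layerIdx

lemma layerMeasure_mono (h : a ≤ b) : layerMeasure Δ i a ≤ layerMeasure Δ i b :=
  withDensity_mono (ae_of_all _ fun x => h (layerIdx Δ i x))

lemma layerMeasure_smul (c : ℝ≥0∞) (a : ℕ → ℝ≥0∞) :
    layerMeasure Δ i (c • a) = c • layerMeasure Δ i a :=
  withDensity_smul c (measurable_layerDensity a)

lemma dpc_layerMeasure {ε : ℝ} (hΔ : 0 < Δ) (ha_anti : Antitone a)
    (ha_le : ∀ k, a k ≤ ENNReal.ofReal (exp ε) * a (k + i)) :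
    DPC ε Δ (layerMeasure Δ i a) := by
  intro S hS t ht
  have h_emb : MeasurableEmbedding (· + t) := measurableEmbedding_addRight t
  rw [layerMeasure, withDensity_apply _ hS, withDensity_apply _ (h_emb.measurableSet_image.2 hS),
    ← (measurePreserving_add_right volume t).setLIntegral_comp_emb h_emb,
    ← lintegral_const_mul' _ _ ENNReal.ofReal_ne_top]
  refine lintegral_mono fun x => (ha_le _).trans ?_
  gcongr
  exact ha_anti (layerIdx_add_le hΔ ht x)

lemma lintegral_layerMeasure {f : ℝ × ℝ → ℝ≥0∞} (hf : Measurable f) :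
    ∫⁻ x, f x ∂layerMeasure Δ i a = ∑' k, a k * ∫⁻ x in layerIdx Δ i ⁻¹' {k}, f x := by
  have h_swap : ∫⁻ x, f x ∂layerMeasure Δ i a =
      ∫⁻ x, a (layerIdx Δ i x) ∂volume.withDensity f := by
    rw [layerMeasure, lintegral_withDensity_eq_lintegral_mul _ (measurable_layerDensity a) hf,
      lintegral_withDensity_eq_lintegral_mul _ hf (measurable_layerDensity a), mul_comm]
  rw [h_swap, ← lintegral_map (measurable_of_countable a) measurable_layerIdx,
    lintegral_countable']
  refine tsum_congr fun k => ?_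
  have h_meas : MeasurableSet (layerIdx Δ i ⁻¹' {k}) :=
    measurable_layerIdx (measurableSet_singleton k)
  rw [Measure.map_apply measurable_layerIdx (measurableSet_singleton k),
    withDensity_apply _ h_meas]

end LayerMeasure

section ResidueClasses

variable {q : ℝ} {i : ℕ}

lemma apply_mul_add_of_geometric {M : Type*} [Monoid M] {u : ℕ → M} {r : M}
    (hu : ∀ k, u (k + i) = r * u k) (n j : ℕ) : u (n * i + j) = r ^ n * u j := by
  induction n with
  | zero => simp
  | succ n ih => rw [Nat.succ_mul, add_right_comm, hu, ih, ← mul_assoc, pow_succ']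

lemma tsum_eq_sum_range_tsum_mul_add (hi : 0 < i) (f : ℕ → ℝ≥0∞) :
    ∑' k, f k = ∑ j ∈ Finset.range i, ∑' n, f (n * i + j) := by
  have : NeZero i := ⟨hi.ne'⟩
  rw [← (Nat.divModEquiv i).symm.tsum_eq, ENNReal.tsum_prod', ENNReal.tsum_comm, tsum_fintype,
    Finset.sum_range]
  rfl

/-- The total `layerWeight` of the layers `j, i + j, 2 * i + j, …`, for a density which is `1` on
layer `j` and decays by the factor `q` over each period. -/
def classMoment (q : ℝ) (i p j : ℕ) : ℝ≥0∞ :=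
  ∑' n : ℕ, ENNReal.ofReal (q ^ n * layerWeight p (n * i + j))

lemma lintegral_pow_layerMeasure_of_geometric {Δ : ℝ} {a : ℕ → ℝ≥0∞} (hΔ : 0 < Δ) (hi : 0 < i)
    (hq : 0 ≤ q) (ha : ∀ k, a (k + i) = ENNReal.ofReal q * a k) (p : ℕ) :
    ∫⁻ x, ENNReal.ofReal (l1 x) ^ p ∂layerMeasure Δ i a =
      layerScale Δ i p * ∑ j ∈ Finset.range i, a j * classMoment q i p j := by
  rw [lintegral_layerMeasure (by fun_prop), tsum_eq_sum_range_tsum_mul_add hi, Finset.mul_sum]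
  refine Finset.sum_congr rfl fun j _ => ?_
  rw [classMoment, ← ENNReal.tsum_mul_left, ← ENNReal.tsum_mul_left]
  refine tsum_congr fun n => ?_
  rw [setLIntegral_layer hΔ hi, apply_mul_add_of_geometric ha, ← ENNReal.ofReal_pow hq,
    ENNReal.ofReal_mul (pow_nonneg hq n)]
  ring

lemma hasSum_sq_mul_geometric (hq : ‖q‖ < 1) :
    HasSum (fun n : ℕ => (n : ℝ) ^ 2 * q ^ n) (q * (1 + q) / (1 - q) ^ 3) := by
  have h_ne : 1 - q ≠ 0 := by linarith [lt_of_abs_lt hq]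
  have h_choose (n : ℕ) : (((n + 2).choose 2 : ℕ) : ℝ) = (n ^ 2 + 3 * n + 2) / 2 := by
    rw [Nat.cast_choose_two]
    push_cast
    ring
  have h_const := (hasSum_geometric_of_norm_lt_one hq).mul_left 2
  have h_lin := (hasSum_coe_mul_geometric_of_norm_lt_one hq).mul_left 3
  have h_quad := (hasSum_choose_mul_geometric_of_norm_lt_one 2 hq).mul_left 2
  simp only [h_choose] at h_quad
  convert! (h_quad.sub h_lin).sub h_const using 1
  · funext n
    ring
  · field_simp
    ring

/-- The mean of a random variable that is uniform on `[n * i + j, n * i + j + 1]`, where `n` is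
geometrically distributed with ratio `q`; layer `k` is the interval `[k, k + 1]` of norms in units
of `Δ / i`. -/
def classMean (q : ℝ) (i j : ℕ) : ℝ := i * (q / (1 - q)) + (j + 1 / 2)

/-- The variance of the random variable in `classMean`, which is the same for all classes. -/
def classVariance (q : ℝ) (i : ℕ) : ℝ := i ^ 2 * (q / (1 - q) ^ 2) + 1 / 12

lemma classMoment_eq_ofReal (hq : 0 ≤ q) {p j : ℕ} {s : ℝ}
    (hs : HasSum (fun n : ℕ => q ^ n * layerWeight p (n * i + j)) s) :
    classMoment q i p j = ENNReal.ofReal s := by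
  have h_nonneg (n : ℕ) : 0 ≤ q ^ n * layerWeight p (n * i + j) :=
    mul_nonneg (pow_nonneg hq n) (layerWeight_nonneg _ _)
  rw [classMoment, ← ENNReal.ofReal_tsum_of_nonneg h_nonneg hs.summable, hs.tsum_eq]

lemma classMoment_zero_eq (hq₀ : 0 ≤ q) (hq₁ : q < 1) (i j : ℕ) :
    classMoment q i 0 j = ENNReal.ofReal (2 / (1 - q) * classMean q i j) := by
  have h_norm : ‖q‖ < 1 := by rwa [Real.norm_of_nonneg hq₀]
  have h_ne : 1 - q ≠ 0 := by linarith
  have h_const := (hasSum_geometric_of_norm_lt_one h_norm).mul_left (2 * (j : ℝ) + 1)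
  have h_lin := (hasSum_coe_mul_geometric_of_norm_lt_one h_norm).mul_left (2 * (i : ℝ))
  refine classMoment_eq_ofReal hq₀ ?_
  convert! h_const.add h_lin using 1
  · funext n
    simp only [layerWeight]
    push_cast
    ring
  · simp only [classMean]
    field_simp
    ring

lemma classMoment_one_eq (hq₀ : 0 ≤ q) (hq₁ : q < 1) (i j : ℕ) :
    classMoment q i 1 j =
      ENNReal.ofReal (3 / (1 - q) * (classMean q i j ^ 2 + classVariance q i)) := by
  have h_norm : ‖q‖ < 1 := by rwa [Real.norm_of_nonneg hq₀]
  have h_ne : 1 - q ≠ 0 := by linarith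
  have h_const := (hasSum_geometric_of_norm_lt_one h_norm).mul_left (3 * (j : ℝ) ^ 2 + 3 * j + 1)
  have h_lin := (hasSum_coe_mul_geometric_of_norm_lt_one h_norm).mul_left
    (6 * (i : ℝ) * j + 3 * i)
  have h_sq := (hasSum_sq_mul_geometric h_norm).mul_left (3 * (i : ℝ) ^ 2)
  refine classMoment_eq_ofReal hq₀ ?_
  convert! (h_const.add h_lin).add h_sq using 1
  · funext n
    simp only [layerWeight]
    push_cast
    ring
  · simp only [classMean, classVariance]
    field_simp
    ring

lemma classVariance_le_mul_classMean (hq₀ : 0 ≤ q) (hq₁ : q < 1) {j l : ℕ} (h : i ≤ j + l + 1) :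
    classVariance q i ≤ classMean q i j * classMean q i l := by
  have h_ne : 1 - q ≠ 0 := by linarith
  have h_excess : classMean q i j * classMean q i l - classVariance q i =
      (i * ((j + l + 1) - i) * (q / (1 - q)) + (j * l + (j + l) / 2 + 1 / 6) : ℝ) := by
    simp only [classMean, classVariance]
    field_simp
    ring
  have h_cast : (0 : ℝ) ≤ (j + l + 1) - i := sub_nonneg.mpr (by exact_mod_cast h)
  have h_ratio : 0 ≤ q / (1 - q) := div_nonneg hq₀ (by linarith)
  rw [← sub_nonneg, h_excess]
  positivity

lemma classMoment_one_mul_zero_le (hq₀ : 0 ≤ q) (hq₁ : q < 1) {j l : ℕ} (hjl : j ≤ l)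
    (h : i ≤ j + l + 1) :
    classMoment q i 1 j * classMoment q i 0 l ≤ classMoment q i 1 l * classMoment q i 0 j := by
  have h_pos : 0 < 1 - q := by linarith
  have h_mean (k : ℕ) : 0 ≤ classMean q i k := by unfold classMean; positivity
  have h_var : 0 ≤ classVariance q i := by unfold classVariance; positivity
  have h_mono : classMean q i j ≤ classMean q i l := by unfold classMean; gcongr
  rw [classMoment_one_eq hq₀ hq₁, classMoment_one_eq hq₀ hq₁, classMoment_zero_eq hq₀ hq₁,
    classMoment_zero_eq hq₀ hq₁, ← ENNReal.ofReal_mul (by positivity),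
    ← ENNReal.ofReal_mul (by positivity)]
  set u := classMean q i j
  set w := classMean q i l
  set v := classVariance q i
  have h_cross : (u ^ 2 + v) * w ≤ (w ^ 2 + v) * u := by
    have h_factor : 0 ≤ (w - u) * (u * w - v) := mul_nonneg (sub_nonneg.mpr h_mono)
      (sub_nonneg.mpr (classVariance_le_mul_classMean hq₀ hq₁ h))
    linarith
  refine ENNReal.ofReal_le_ofReal ?_
  calc 3 / (1 - q) * (u ^ 2 + v) * (2 / (1 - q) * w)
      = 3 / (1 - q) * (2 / (1 - q)) * ((u ^ 2 + v) * w) := by ring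
    _ ≤ 3 / (1 - q) * (2 / (1 - q)) * ((w ^ 2 + v) * u) := by gcongr
    _ = 3 / (1 - q) * (w ^ 2 + v) * (2 / (1 - q) * u) := by ring

end ResidueClasses

lemma sum_mul_sum_le_of_eqOn_erase {ι R : Type*} [DecidableEq ι] [CommSemiring R] [PartialOrder R]
    [CanonicallyOrderedAdd R] {s : Finset ι} {l : ι} (hl : l ∈ s)
    {x y m c : ι → R} (h_eq : ∀ j ∈ s.erase l, y j = x j) (h_le : y l ≤ x l)
    (h_ratio : ∀ j ∈ s.erase l, c j * m l ≤ c l * m j) :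
    (∑ j ∈ s, y j * c j) * ∑ j ∈ s, x j * m j ≤
      (∑ j ∈ s, x j * c j) * ∑ j ∈ s, y j * m j := by
  obtain ⟨d, hd⟩ := le_iff_exists_add.mp h_le
  have h_cost : ∑ j ∈ s.erase l, y j * c j = ∑ j ∈ s.erase l, x j * c j :=
    Finset.sum_congr rfl fun j hj => by rw [h_eq j hj]
  have h_mass : ∑ j ∈ s.erase l, y j * m j = ∑ j ∈ s.erase l, x j * m j :=
    Finset.sum_congr rfl fun j hj => by rw [h_eq j hj]
  simp only [← Finset.add_sum_erase s _ hl, h_cost, h_mass, hd]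
  set C := ∑ j ∈ s.erase l, x j * c j with hC
  set M := ∑ j ∈ s.erase l, x j * m j with hM
  have h_rest : C * m l ≤ c l * M := by
    rw [hC, hM, Finset.sum_mul, Finset.mul_sum]
    refine Finset.sum_le_sum fun j hj => ?_
    rw [mul_assoc, mul_left_comm (c l)]
    exact mul_le_mul_right (h_ratio j hj) _
  calc (y l * c l + C) * ((y l + d) * m l + M)
      = (y l * c l + C) * (y l * m l + M) + d * (y l * c l * m l + C * m l) := by ring
    _ ≤ (y l * c l + C) * (y l * m l + M) + d * (y l * c l * m l + c l * M) := by gcongr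
    _ = ((y l + d) * c l + C) * (y l * m l + M) := by ring

lemma cost_mul_measure_univ_layerMeasure_le {Δ q : ℝ} {i : ℕ} {a b : ℕ → ℝ≥0∞} (hΔ : 0 < Δ)
    (hi : 0 < i) (hq₀ : 0 ≤ q) (hq₁ : q < 1) (ha : ∀ k, a (k + i) = ENNReal.ofReal q * a k)
    (hb : ∀ k, b (k + i) = ENNReal.ofReal q * b k) (h_eq : ∀ j < i - 1, b j = a j)
    (h_le : b (i - 1) ≤ a (i - 1)) :
    cost (layerMeasure Δ i b) * layerMeasure Δ i a Set.univ ≤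
      cost (layerMeasure Δ i a) * layerMeasure Δ i b Set.univ := by
  simp only [cost_eq_lintegral_pow_one, measure_univ_eq_lintegral_pow_zero,
    lintegral_pow_layerMeasure_of_geometric hΔ hi hq₀ ha,
    lintegral_pow_layerMeasure_of_geometric hΔ hi hq₀ hb]
  rw [mul_mul_mul_comm, mul_mul_mul_comm _ (∑ j ∈ Finset.range i, a j * _)]
  have h_last : i - 1 ∈ Finset.range i := Finset.mem_range.mpr (Nat.sub_one_lt_of_lt hi)
  refine mul_le_mul_right (sum_mul_sum_le_of_eqOn_erase h_last (fun j hj => h_eq j ?_) h_le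
    fun j hj => ?_) _
  · grind
  · have hj := Finset.mem_range.mp (Finset.mem_of_mem_erase hj)
    exact classMoment_one_mul_zero_le hq₀ hq₁ (by omega) (by omega)

section LowerLast

variable {α : Type*} {i : ℕ} {a : ℕ → α}

/-- The sequence `a` with the last value of each period of length `i` replaced by the first
value of the next period. -/
def lowerLast (i : ℕ) (a : ℕ → α) (k : ℕ) : α := if i ∣ k + 1 then a (k + 1) else a k

lemma lowerLast_of_lt {k : ℕ} (hk : k < i - 1) : lowerLast i a k = a k :=
  if_neg (Nat.not_dvd_of_pos_of_lt k.succ_pos (by omega))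

lemma lowerLast_sub_one (hi : 0 < i) : lowerLast i a (i - 1) = a i := by
  rw [lowerLast, Nat.sub_add_cancel hi, if_pos dvd_rfl]

lemma lowerLast_le [Preorder α] (ha : Antitone a) : lowerLast i a ≤ a := fun k => by
  unfold lowerLast
  split_ifs
  exacts [ha k.le_succ, le_rfl]

lemma apply_add_one_le_lowerLast [Preorder α] (ha : Antitone a) (k : ℕ) :
    a (k + 1) ≤ lowerLast i a k := by
  unfold lowerLast
  split_ifs
  exacts [le_rfl, ha k.le_succ]

lemma antitone_lowerLast [Preorder α] (ha : Antitone a) : Antitone (lowerLast i a) :=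
  antitone_nat_of_succ_le fun k => (lowerLast_le ha _).trans (apply_add_one_le_lowerLast ha k)

lemma lowerLast_geometric [Mul α] {c : α} (ha : ∀ k, a k = c * a (k + i)) (k : ℕ) :
    lowerLast i a k = c * lowerLast i a (k + i) := by
  have h_dvd : i ∣ k + i + 1 ↔ i ∣ k + 1 := by rw [add_right_comm, Nat.dvd_add_self_right]
  simp only [lowerLast, h_dvd]
  split_ifs
  · rw [ha (k + 1), add_right_comm]
  · exact ha k

lemma lowerLast_zero [Mul α] (hi : 2 ≤ i) {c : α} (ha : ∀ k, a k = c * a (k + i)) :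
    lowerLast i a 0 = c * lowerLast i a (i - 1) := by
  rw [lowerLast_of_lt (by omega), lowerLast_sub_one (by omega), ha 0, zero_add]

lemma le_smul_lowerLast [Preorder α] [Mul α] [MulLeftMono α] (hi : 0 < i) (ha_anti : Antitone a)
    {c : α} (ha : ∀ k, a k = c * a (k + i)) : a ≤ c • lowerLast i a := fun k =>
  calc a k = c * a (k + i) := ha k
    _ ≤ c * a (k + 1) := by gcongr; exact ha_anti (by omega)
    _ ≤ c * lowerLast i a k := by gcongr; exact apply_add_one_le_lowerLast ha_anti k

end LowerLast

lemma apply_add_eq_exp_neg_mul {ε : ℝ} {i : ℕ} {a : ℕ → ℝ≥0∞}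
    (ha : ∀ k, a k = ENNReal.ofReal (exp ε) * a (k + i)) (k : ℕ) :
    a (k + i) = ENNReal.ofReal (exp (-ε)) * a k := by
  rw [ha k, ← mul_assoc, ← ENNReal.ofReal_mul (exp_nonneg _), ← exp_add, neg_add_cancel, exp_zero,
    ENNReal.ofReal_one, one_mul]

lemma layerMeasure_lowerLast_ne_zero {Δ : ℝ} {i : ℕ} {a : ℕ → ℝ≥0∞} (hi : 0 < i)
    (ha_anti : Antitone a) {c : ℝ≥0∞} (ha : ∀ k, a k = c * a (k + i))
    (h_ne : layerMeasure Δ i a ≠ 0) : layerMeasure Δ i (lowerLast i a) ≠ 0 := fun h_zero => by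
  have h_le : layerMeasure Δ i a ≤ layerMeasure Δ i (c • lowerLast i a) :=
    layerMeasure_mono (le_smul_lowerLast hi ha_anti ha)
  rw [layerMeasure_smul, h_zero, smul_zero] at h_le
  exact h_ne (Measure.nonpos_iff_eq_zero'.mp h_le)

lemma cost_inv_smul_lowerLast_le {ε Δ : ℝ} {i : ℕ} {a : ℕ → ℝ≥0∞} (hε : 0 < ε) (hΔ : 0 < Δ)
    (hi : 0 < i) [IsProbabilityMeasure (layerMeasure Δ i a)] (ha_anti : Antitone a)
    (ha_geo : ∀ k, a k = ENNReal.ofReal (exp ε) * a (k + i)) :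
    cost ((layerMeasure Δ i (lowerLast i a) Set.univ)⁻¹ • layerMeasure Δ i (lowerLast i a)) ≤
      cost (layerMeasure Δ i a) := by
  have h_ne_zero : layerMeasure Δ i (lowerLast i a) ≠ 0 :=
    layerMeasure_lowerLast_ne_zero hi ha_anti ha_geo (NeZero.ne _)
  have : IsFiniteMeasure (layerMeasure Δ i (lowerLast i a)) :=
    isFiniteMeasure_of_le _ (layerMeasure_mono (lowerLast_le ha_anti))
  have h_cross := cost_mul_measure_univ_layerMeasure_le hΔ hi (exp_nonneg (-ε))
    (exp_lt_one_iff.mpr (neg_neg_of_pos hε)) (apply_add_eq_exp_neg_mul ha_geo)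
    (apply_add_eq_exp_neg_mul (lowerLast_geometric ha_geo)) (fun _ => lowerLast_of_lt)
    (lowerLast_le ha_anti _)
  rw [measure_univ, mul_one, mul_comm] at h_cross
  rwa [cost_smul, ENNReal.inv_mul_le_iff (Measure.measure_univ_ne_zero.mpr h_ne_zero)
    (measure_ne_top _ _)]

/-- Lemma 6: for i ≥ 2, given μ_a ∈ 𝒫_i^{(b)} with density sequence (a_k), there are an
integer 0 ≤ k* ≤ i−2 and μ_b ∈ 𝒫_i^{(b)} with density sequence (b_k) such that
b₀ = b₁ = ⋯ = b_{k*}, b₀ = e^ε · b_{i−1}, and V(μ_b) ≤ V(μ_a). -/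
theorem exists_flat_head (ε Δ : ℝ) (hε : 0 < ε) (hΔ : 0 < Δ) (i : ℕ) (hi : 2 ≤ i)
    (μa : Measure (ℝ × ℝ)) (a : ℕ → ℝ≥0∞) (hμa : MemP ε Δ μa)
    (ha_dens : HasDensitySeq Δ i μa a) (ha_mono : Antitone a)
    (ha_geo : ∀ k : ℕ, a k = ENNReal.ofReal (Real.exp ε) * a (k + i)) :
    ∃ (kstar : ℕ) (μb : Measure (ℝ × ℝ)) (b : ℕ → ℝ≥0∞),
      kstar ≤ i - 2 ∧
      MemP ε Δ μb ∧ HasDensitySeq Δ i μb b ∧ Antitone b ∧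
      (∀ k : ℕ, b k = ENNReal.ofReal (Real.exp ε) * b (k + i)) ∧
      (∀ j : ℕ, j ≤ kstar → b j = b 0) ∧
      b 0 = ENNReal.ofReal (Real.exp ε) * b (i - 1) ∧
      cost μb ≤ cost μa := by
  obtain rfl : μa = layerMeasure Δ i a := ha_dens
  have := hμa.1
  set ν := layerMeasure Δ i (lowerLast i a)
  have : NeZero ν := ⟨layerMeasure_lowerLast_ne_zero (by omega) ha_mono ha_geo (NeZero.ne _)⟩
  have : IsFiniteMeasure ν := isFiniteMeasure_of_le _ (layerMeasure_mono (lowerLast_le ha_mono))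
  set c := (ν Set.univ)⁻¹
  have hν_dpc : DPC ε Δ ν := dpc_layerMeasure hΔ (antitone_lowerLast ha_mono)
    fun k => (lowerLast_geometric ha_geo k).le
  refine ⟨0, c • ν, c • lowerLast i a, Nat.zero_le _, ⟨inferInstance, hν_dpc.smul c⟩,
    (layerMeasure_smul c _).symm, (antitone_lowerLast ha_mono).const_mul' c, fun k => ?_, ?_, ?_,
    cost_inv_smul_lowerLast_le hε hΔ (by omega) ha_mono ha_geo⟩
  · simp only [Pi.smul_apply, smul_eq_mul, lowerLast_geometric ha_geo k, mul_left_comm]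
  · simp only [Nat.le_zero, forall_eq]
  · simp only [Pi.smul_apply, smul_eq_mul, lowerLast_zero hi ha_geo, mul_left_comm]
end
end

section
/- For all ε > 0 and Δ > 0, V* = inf_{μ ∈ ⋃_{i≥3} 𝒫_i^{(c)}} V(μ); that is, in minimizing the expected ℓ¹ cost one may restrict to measures in 𝒫_i^{(b)} whose density sequence additionally satisfies a₀ = e^ε · a_{i−1} and a₀ = a₁ = ⋯ = a_k for some integer 0 ≤ k ≤ i−2. (Lemma 7.) -/
open MeasureTheory Real Filter
open scoped ENNReal Topology

noncomputable section

/-!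
The argument works for any norm on a finite-dimensional real space. Convolving a private noise with
the uniform distribution on a small ball gives it a private density and costs arbitrarily little.
Averaging that density over spheres keeps its mass, its cost and the privacy constraint, and leaves
a profile `h` of the radius. Fix a radius `λ` and extend the running supremum of `h` on
`[λ - Δ, λ]` to all radii by the decay `G r = K * G (r + Δ)`, where `K = e^ε`. Privacy makes this
envelope `G` nonincreasing, at least `h` below `λ` and at most `h` above. Hence the integral of
`(h - G) * (r - λ)` is nonnegative, and if the normalised cost of `G` is at least `λ`, then so is
that of `h`. Sampling `G` on ever finer layers gives members of `𝒫_i^{(c)}`, so by Fatou's lemma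
each lower bound `λ` for their costs is a lower bound for the cost of `G`.
-/

open Set Metric

section DecayingFunctions

/-- The multiplicative decay `g x = K * g (x + p)` with factor `K = e^ε`: for density sequences
with `p = i`, and for radial profiles on `ℝ` with `p = Δ`. -/
def HasDecay {X : Type*} [Add X] (K : ℝ≥0∞) (p : X) (g : X → ℝ≥0∞) : Prop :=
  ∀ x, g x = K * g (x + p)

/-- The density sequences admitted in `𝒫_i^{(c)}`, for the privacy factor `K = e^ε`. The plateau
`a₀ = ⋯ = a_k` is left out because `k = 0` is allowed there. -/
structure IsCandidateSeq (K : ℝ≥0∞) (i : ℕ) (a : ℕ → ℝ≥0∞) : Prop where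
  antitone : Antitone a
  hasDecay : HasDecay K i a
  zero_eq : a 0 = K * a (i - 1)

lemma IsCandidateSeq.const_mul {K : ℝ≥0∞} {i : ℕ} {a : ℕ → ℝ≥0∞} (ha : IsCandidateSeq K i a)
    (c : ℝ≥0∞) : IsCandidateSeq K i (fun k ↦ c * a k) where
  antitone _ _ hjk := mul_le_mul_right (ha.antitone hjk) c
  hasDecay k := (congrArg (c * ·) (ha.hasDecay k)).trans (mul_left_comm ..)
  zero_eq := (congrArg (c * ·) ha.zero_eq).trans (mul_left_comm ..)

/-- The index of the layer `[kΔ/i, (k+1)Δ/i)` containing the radius `r`. -/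
def layer (Δ : ℝ) (i : ℕ) (r : ℝ) : ℕ := ⌊r * i / Δ⌋₊

lemma measurable_comp_layer (Δ : ℝ) (i : ℕ) (a : ℕ → ℝ≥0∞) :
    Measurable fun r ↦ a (layer Δ i r) :=
  (measurable_of_countable a).comp
    (Nat.measurable_floor.comp ((measurable_id.mul_const _).div_const _))

lemma monotone_layer {Δ : ℝ} (hΔ : 0 < Δ) (i : ℕ) : Monotone (layer Δ i) :=
  fun r s hrs ↦ Nat.floor_le_floor (by gcongr)

lemma layer_add {Δ : ℝ} (hΔ : 0 < Δ) (i : ℕ) {r : ℝ} (hr : 0 ≤ r) :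
    layer Δ i (r + Δ) = layer Δ i r + i := by
  rw [layer, layer, ← Nat.floor_add_natCast (by positivity)]
  congr 1
  field_simp

end DecayingFunctions

section Discretisation

variable {K : ℝ≥0∞} {Δ : ℝ} {G : ℝ → ℝ≥0∞}

/-- The index `m` such that a profile is sampled at `mΔ/i` on layer `k`. The right end `m = k + 1`
of the layer is moved one step further on the last layer of each period, because
`a₀ = K * a_{i-1}` asks for samples at distance `Δ` on the layers `0` and `i - 1`. -/
def sampleIdx (i k : ℕ) : ℕ := k + 1 + if i ∣ k + 1 then 1 else 0

lemma lt_sampleIdx (i k : ℕ) : k < sampleIdx i k := by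
  unfold sampleIdx; split_ifs <;> omega

lemma sampleIdx_le (i k : ℕ) : sampleIdx i k ≤ k + 2 := by
  unfold sampleIdx; split_ifs <;> omega

lemma monotone_sampleIdx (i : ℕ) : Monotone (sampleIdx i) :=
  monotone_nat_of_le_succ fun k ↦ (sampleIdx_le i k).trans (lt_sampleIdx i (k + 1))

lemma sampleIdx_add (i k : ℕ) : sampleIdx i (k + i) = sampleIdx i k + i := by
  have hdvd : i ∣ k + i + 1 ↔ i ∣ k + 1 := by
    rw [add_right_comm, Nat.dvd_add_self_right]
  simp only [sampleIdx, hdvd]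
  ring

lemma sampleIdx_pred {i : ℕ} (hi : 2 ≤ i) : sampleIdx i (i - 1) = sampleIdx i 0 + i := by
  have hlast : i - 1 + 1 = i := by omega
  have hfirst : ¬ i ∣ 0 + 1 := Nat.not_dvd_of_pos_of_lt (by omega) (by omega)
  rw [sampleIdx, sampleIdx, hlast, if_pos dvd_rfl, if_neg hfirst]
  ring

/-- A layer sequence sampled from the profile `G`. -/
def layerSample (G : ℝ → ℝ≥0∞) (Δ : ℝ) (i k : ℕ) : ℝ≥0∞ := G (sampleIdx i k * Δ / i)

lemma isCandidateSeq_layerSample (hΔ : 0 ≤ Δ) (hG : Antitone G) (hdecay : HasDecay K Δ G)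
    {i : ℕ} (hi : 2 ≤ i) : IsCandidateSeq K i (layerSample G Δ i) := by
  have hi₀ : (i : ℝ) ≠ 0 := by positivity
  have hshift : ∀ m : ℕ, G (m * Δ / i) = K * G ((m + i : ℕ) * Δ / i) := fun m ↦ by
    rw [hdecay]
    congr 2
    push_cast
    field_simp
  refine ⟨fun j k hjk ↦ hG ?_, fun k ↦ ?_, ?_⟩
  · have := monotone_sampleIdx i hjk
    gcongr
  · rw [layerSample, hshift, ← sampleIdx_add, layerSample]
  · rw [layerSample, hshift, ← sampleIdx_pred hi, layerSample]

lemma layerSample_layer_le (hΔ : 0 < Δ) (hG : Antitone G) {i : ℕ} (hi : i ≠ 0) (r : ℝ) :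
    layerSample G Δ i (layer Δ i r) ≤ G r := by
  refine hG ?_
  have hfloor : r * i / Δ ≤ sampleIdx i (layer Δ i r) :=
    (Nat.lt_floor_add_one _).le.trans (mod_cast lt_sampleIdx i (layer Δ i r))
  rw [le_div_iff₀ (by positivity)]
  exact (div_le_iff₀ hΔ).1 hfloor

lemma le_layerSample_layer (hΔ : 0 < Δ) (hG : Antitone G) {i : ℕ} (hi : i ≠ 0) {r : ℝ}
    (hr : 0 ≤ r) : G (r + 2 * Δ / i) ≤ layerSample G Δ i (layer Δ i r) := by
  refine hG ?_
  have hfloor : (layer Δ i r : ℝ) ≤ r * i / Δ := Nat.floor_le (by positivity)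
  calc (sampleIdx i (layer Δ i r) * Δ / i : ℝ)
      ≤ (layer Δ i r + 2) * Δ / i := by
        gcongr
        exact_mod_cast sampleIdx_le i (layer Δ i r)
    _ ≤ (r * i / Δ + 2) * Δ / i := by gcongr
    _ = r + 2 * Δ / i := by field_simp

lemma tendsto_layerSample_layer (hΔ : 0 < Δ) (hG : Antitone G) {r : ℝ} (hr : 0 ≤ r)
    (hGr : ContinuousAt G r) :
    Tendsto (fun i ↦ layerSample G Δ i (layer Δ i r)) atTop (𝓝 (G r)) := by
  have hlower : Tendsto (fun i : ℕ ↦ G (r + 2 * Δ / i)) atTop (𝓝 (G r)) :=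
    hGr.tendsto.comp (by simpa using (tendsto_const_div_atTop_nhds_zero_nat (2 * Δ)).const_add r)
  refine tendsto_of_tendsto_of_tendsto_of_le_of_le' hlower tendsto_const_nhds ?_ ?_
  · filter_upwards [eventually_ne_atTop 0] with i hi using le_layerSample_layer hΔ hG hi hr
  · filter_upwards [eventually_ne_atTop 0] with i hi using layerSample_layer_le hΔ hG hi r

end Discretisation

section CostRatio

variable {K c : ℝ≥0∞} {Δ : ℝ} {ρ : Measure ℝ}

/-- `c` is a lower bound for the normalised cost of every candidate profile of finite mass, where
`ρ` is the distribution of the radius. -/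
def IsCostRatioBound (K : ℝ≥0∞) (Δ : ℝ) (ρ : Measure ℝ) (c : ℝ≥0∞) : Prop :=
  ∀ i, 3 ≤ i → ∀ a, IsCandidateSeq K i a → ∫⁻ r, a (layer Δ i r) ∂ρ ≠ ∞ →
    c * ∫⁻ r, a (layer Δ i r) ∂ρ ≤ ∫⁻ r, a (layer Δ i r) * ENNReal.ofReal r ∂ρ

lemma IsCostRatioBound.mono {c' : ℝ≥0∞} (hc : IsCostRatioBound K Δ ρ c) (hle : c' ≤ c) :
    IsCostRatioBound K Δ ρ c' :=
  fun i hi a ha hfin ↦ (mul_le_mul_left hle _).trans (hc i hi a ha hfin)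

lemma IsCostRatioBound.mul_lintegral_le_of_hasDecay [NullSingletonClass ρ] (hρ : ∀ᵐ r ∂ρ, 0 < r)
    (hΔ : 0 < Δ) (hc : IsCostRatioBound K Δ ρ c) {G : ℝ → ℝ≥0∞} (hG : Antitone G)
    (hdecay : HasDecay K Δ G) (hfin : ∫⁻ r, G r ∂ρ ≠ ∞) :
    c * ∫⁻ r, G r ∂ρ ≤ ∫⁻ r, G r * ENNReal.ofReal r ∂ρ := by
  set a := layerSample G Δ
  have hbound : ∀ i, 3 ≤ i →
      ∫⁻ r, c * a i (layer Δ i r) ∂ρ ≤ ∫⁻ r, G r * ENNReal.ofReal r ∂ρ := fun i hi ↦ by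
    have hle : ∀ r, a i (layer Δ i r) ≤ G r := layerSample_layer_le hΔ hG (by omega)
    calc ∫⁻ r, c * a i (layer Δ i r) ∂ρ
        = c * ∫⁻ r, a i (layer Δ i r) ∂ρ := lintegral_const_mul c (measurable_comp_layer ..)
      _ ≤ ∫⁻ r, a i (layer Δ i r) * ENNReal.ofReal r ∂ρ :=
        hc i hi _ (isCandidateSeq_layerSample hΔ.le hG hdecay (by omega))
          (ne_top_of_le_ne_top hfin (lintegral_mono hle))
      _ ≤ ∫⁻ r, G r * ENNReal.ofReal r ∂ρ := lintegral_mono fun r ↦ by gcongr; exact hle r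
  have hcont : ∀ᵐ r ∂ρ, ContinuousAt G r := by
    filter_upwards [hG.countable_not_continuousAt.ae_notMem ρ] with r hr using by simpa using hr
  calc c * ∫⁻ r, G r ∂ρ
      = ∫⁻ r, c * G r ∂ρ := (lintegral_const_mul c hG.measurable).symm
    _ ≤ ∫⁻ r, liminf (fun i ↦ c * a i (layer Δ i r)) atTop ∂ρ := by
      refine lintegral_mono_ae ?_
      filter_upwards [hρ, hcont] with r hr hGr
      obtain hzero | hpos := eq_or_ne (G r) 0
      · simp [hzero]
      · exact (ENNReal.Tendsto.const_mul (tendsto_layerSample_layer hΔ hG hr.le hGr)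
          (Or.inl hpos)).liminf_eq.ge
    _ ≤ liminf (fun i ↦ ∫⁻ r, c * a i (layer Δ i r) ∂ρ) atTop :=
      lintegral_liminf_le fun i ↦ (measurable_comp_layer ..).const_mul c
    _ ≤ liminf (fun _ : ℕ ↦ ∫⁻ r, G r * ENNReal.ofReal r ∂ρ) atTop :=
      liminf_le_liminf ((eventually_ge_atTop 3).mono hbound)
    _ = ∫⁻ r, G r * ENNReal.ofReal r ∂ρ := liminf_const _

end CostRatio

section DPDensity

/-- The pointwise `ε`-differential-privacy constraint on a density, with `K = e^ε`. -/
def IsDPDensity {X : Type*} [PseudoMetricSpace X] (K : ℝ≥0∞) (Δ : ℝ) (f : X → ℝ≥0∞) : Prop :=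
  ∀ x y, dist x y ≤ Δ → f x ≤ K * f y

variable {E : Type*} [NormedAddCommGroup E] {K : ℝ≥0∞} {Δ : ℝ} {f : E → ℝ≥0∞}

lemma IsDPDensity.le_pow_mul [NormedSpace ℝ E] (hΔ : 0 ≤ Δ) (hf : IsDPDensity K Δ f) (n : ℕ)
    {x y : E} (hxy : dist x y ≤ n * Δ) : f x ≤ K ^ n * f y := by
  induction n generalizing y with
  | zero => simp [dist_le_zero.1 (by simpa using hxy)]
  | succ n ih =>
    obtain ⟨z, hxz, hzy⟩ : ∃ z, dist x z ≤ n * Δ ∧ dist z y ≤ Δ :=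
      exists_dist_le_le (by positivity) hΔ (by push_cast at hxy; linarith)
    calc f x ≤ K ^ n * f z := ih hxz
      _ ≤ K ^ n * (K * f y) := by gcongr; exact hf z y hzy
      _ = K ^ (n + 1) * f y := by rw [pow_succ, mul_assoc]

lemma IsDPDensity.mul_measure_closedBall_le [MeasurableSpace E] [OpensMeasurableSpace E]
    (hf : IsDPDensity K Δ f) (hfm : Measurable f) (ν : Measure E) (x : E) :
    f x * ν (closedBall x Δ) ≤ K * ∫⁻ y, f y ∂ν := by
  calc f x * ν (closedBall x Δ)
      = ∫⁻ _ in closedBall x Δ, f x ∂ν := (setLIntegral_const _ _).symm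
    _ ≤ ∫⁻ y in closedBall x Δ, K * f y ∂ν :=
      setLIntegral_mono (hfm.const_mul K) fun y hy ↦ hf x y (mem_closedBall'.1 hy)
    _ ≤ ∫⁻ y, K * f y ∂ν := setLIntegral_le_lintegral _ _
    _ = K * ∫⁻ y, f y ∂ν := lintegral_const_mul K hfm

end DPDensity

section GeometricExtension

variable {K : ℝ≥0∞} {Δ : ℝ}

/-- The function with multiplicative decay `K` over the period `Δ` which agrees with `q` on the
fundamental interval `[b, b + Δ)`. -/
def geometricExtension (K : ℝ≥0∞) (hΔ : 0 < Δ) (b : ℝ) (q : ℝ → ℝ≥0∞) (r : ℝ) : ℝ≥0∞ :=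
  K ^ (-toIcoDiv hΔ b r) * q (toIcoMod hΔ b r)

lemma monotone_toIcoDiv (hΔ : 0 < Δ) (b : ℝ) : Monotone (toIcoDiv hΔ b) := fun r s hrs ↦ by
  rw [toIcoDiv_eq_floor, toIcoDiv_eq_floor]
  gcongr

lemma hasDecay_geometricExtension (hK₀ : K ≠ 0) (hK : K ≠ ∞) (hΔ : 0 < Δ) (b : ℝ)
    (q : ℝ → ℝ≥0∞) : HasDecay K Δ (geometricExtension K hΔ b q) := fun r ↦ by
  have hpow : K ^ (-toIcoDiv hΔ b r) = K * K ^ (-(toIcoDiv hΔ b r + 1)) := by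
    calc K ^ (-toIcoDiv hΔ b r) = K ^ (1 + -(toIcoDiv hΔ b r + 1)) := by congr 1; ring
      _ = K * K ^ (-(toIcoDiv hΔ b r + 1)) := by rw [ENNReal.zpow_add hK₀ hK, zpow_one]
  rw [geometricExtension, geometricExtension, toIcoDiv_add_right, toIcoMod_add_right, hpow,
    mul_assoc]

lemma antitone_geometricExtension (hK₁ : 1 ≤ K) (hK : K ≠ ∞) (hΔ : 0 < Δ) {b : ℝ}
    {q : ℝ → ℝ≥0∞} (hq : Antitone q)
    (hwrap : ∀ u ∈ Ico b (b + Δ), ∀ v ∈ Ico b (b + Δ), q u ≤ K * q v) :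
    Antitone (geometricExtension K hΔ b q) := fun r s hrs ↦ by
  have hK₀ : K ≠ 0 := (zero_lt_one.trans_le hK₁).ne'
  rcases (monotone_toIcoDiv hΔ b hrs).eq_or_lt with hdiv | hdiv
  · have hmod : toIcoMod hΔ b r ≤ toIcoMod hΔ b s := by
      rw [toIcoMod, toIcoMod, hdiv]
      gcongr
    rw [geometricExtension, geometricExtension, hdiv]
    exact mul_le_mul_right (hq hmod) _
  · calc K ^ (-toIcoDiv hΔ b s) * q (toIcoMod hΔ b s)
        ≤ K ^ (-toIcoDiv hΔ b s) * (K * q (toIcoMod hΔ b r)) := by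
          gcongr
          exact hwrap _ (toIcoMod_mem_Ico hΔ b s) _ (toIcoMod_mem_Ico hΔ b r)
      _ = K ^ (-toIcoDiv hΔ b s + 1) * q (toIcoMod hΔ b r) := by
          rw [ENNReal.zpow_add hK₀ hK, zpow_one, mul_assoc]
      _ ≤ K ^ (-toIcoDiv hΔ b r) * q (toIcoMod hΔ b r) := by
          gcongr
          omega

end GeometricExtension

section GeometricEnvelope

variable {K : ℝ≥0∞} {Δ : ℝ} {h : ℝ → ℝ≥0∞}

/-- The decreasing profile with geometric decay that dominates the DP profile `h` below the radius
`lam` and is dominated by it above: on the period before `lam` it is the running supremum of `h`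
from the right. -/
def geometricEnvelope (K : ℝ≥0∞) (hΔ : 0 < Δ) (lam : ℝ) (h : ℝ → ℝ≥0∞) : ℝ → ℝ≥0∞ :=
  geometricExtension K hΔ (lam - Δ) fun u ↦ ⨆ s ∈ Icc u lam, h s

lemma IsDPDensity.iSup_Icc_le_pow_mul (hΔ : 0 ≤ Δ) (hh : IsDPDensity K Δ h) (n : ℕ)
    {u lam r : ℝ} (hr : lam ≤ r) (hru : r - u ≤ n * Δ) : ⨆ s ∈ Icc u lam, h s ≤ K ^ n * h r :=
  iSup₂_le fun s hs ↦ hh.le_pow_mul hΔ n <| by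
    rw [dist_comm, Real.dist_eq, abs_of_nonneg (by linarith [hs.2])]
    linarith [hs.1]

lemma antitone_geometricEnvelope (hK₁ : 1 ≤ K) (hK : K ≠ ∞) (hΔ : 0 < Δ)
    (hh : IsDPDensity K Δ h) (lam : ℝ) : Antitone (geometricEnvelope K hΔ lam h) := by
  refine antitone_geometricExtension hK₁ hK hΔ
    (fun u v huv ↦ biSup_mono fun s hs ↦ ⟨huv.trans hs.1, hs.2⟩) fun u hu v hv ↦ ?_
  calc ⨆ s ∈ Icc u lam, h s
      ≤ K ^ 1 * h lam :=
        hh.iSup_Icc_le_pow_mul hΔ.le 1 le_rfl (by rw [Nat.cast_one, one_mul]; linarith [hu.1])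
    _ ≤ K * ⨆ s ∈ Icc v lam, h s := by
      rw [pow_one]
      gcongr
      exact le_iSup₂_of_le lam ⟨by linarith [hv.2], le_rfl⟩ le_rfl

lemma IsDPDensity.le_geometricEnvelope (hΔ : 0 < Δ) (hh : IsDPDensity K Δ h) {r lam : ℝ}
    (hr : r < lam) : h r ≤ geometricEnvelope K hΔ lam h r := by
  set u := toIcoMod hΔ (lam - Δ) r with hu
  have hu_lt : u < lam := by linarith [(toIcoMod_mem_Ico hΔ (lam - Δ) r).2]
  obtain ⟨n, hn⟩ : ∃ n : ℕ, -toIcoDiv hΔ (lam - Δ) r = n := by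
    refine Int.eq_ofNat_of_zero_le ?_
    have hlt : toIcoDiv hΔ (lam - Δ) r < 1 := by
      rw [toIcoDiv_eq_floor, Int.floor_lt, div_lt_iff₀ hΔ]
      push_cast
      linarith
    omega
  have hdist : dist r u ≤ n * Δ := by
    have hsub : u - r = n * Δ := by
      have hn' : (n : ℝ) = -(toIcoDiv hΔ (lam - Δ) r : ℝ) := by exact_mod_cast hn.symm
      rw [hn', ← neg_sub r u, hu, self_sub_toIcoMod_eq_mul, neg_mul]
    rw [dist_comm, Real.dist_eq, hsub, abs_of_nonneg (by positivity)]
  calc h r ≤ K ^ n * h u := hh.le_pow_mul hΔ.le n hdist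
    _ ≤ K ^ n * ⨆ s ∈ Icc u lam, h s := by
      gcongr
      exact le_iSup₂_of_le u ⟨le_rfl, hu_lt.le⟩ le_rfl
    _ = geometricEnvelope K hΔ lam h r := by
      rw [geometricEnvelope, geometricExtension, hn, zpow_natCast]

lemma IsDPDensity.geometricEnvelope_le (hK₀ : K ≠ 0) (hK : K ≠ ∞) (hΔ : 0 < Δ)
    (hh : IsDPDensity K Δ h) {r lam : ℝ} (hr : lam ≤ r) :
    geometricEnvelope K hΔ lam h r ≤ h r := by
  obtain ⟨n, hn⟩ : ∃ n : ℕ, toIcoDiv hΔ (lam - Δ) r = n := by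
    refine Int.eq_ofNat_of_zero_le ?_
    rw [toIcoDiv_eq_floor, Int.floor_nonneg]
    exact div_nonneg (by linarith) hΔ.le
  have hdist : r - toIcoMod hΔ (lam - Δ) r ≤ n * Δ := by
    rw [self_sub_toIcoMod_eq_mul, hn, Int.cast_natCast]
  calc geometricEnvelope K hΔ lam h r
      ≤ K ^ (-(n : ℤ)) * (K ^ n * h r) := by
        rw [geometricEnvelope, geometricExtension, hn]
        gcongr
        exact hh.iSup_Icc_le_pow_mul hΔ.le n hr hdist
    _ = h r := by
      rw [ENNReal.zpow_neg, zpow_natCast, ← mul_assoc,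
        ENNReal.inv_mul_cancel (pow_ne_zero n hK₀) (ENNReal.pow_ne_top hK), one_mul]

lemma IsDPDensity.geometricEnvelope_ne_top (hK₀ : K ≠ 0) (hK : K ≠ ∞) (hΔ : 0 < Δ)
    (hh : IsDPDensity K Δ h) {lam : ℝ} (hlam : h lam ≠ ∞) (r : ℝ) :
    geometricEnvelope K hΔ lam h r ≠ ∞ := by
  have hle : ⨆ s ∈ Icc (toIcoMod hΔ (lam - Δ) r) lam, h s ≤ K ^ 1 * h lam :=
    hh.iSup_Icc_le_pow_mul hΔ.le 1 le_rfl
      (by rw [Nat.cast_one, one_mul]; linarith [(toIcoMod_mem_Ico hΔ (lam - Δ) r).1])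
  exact ENNReal.mul_ne_top (ENNReal.zpow_lt_top hK₀ hK _).ne
    (ne_top_of_le_ne_top (ENNReal.mul_ne_top (ENNReal.pow_ne_top hK) hlam) hle)

end GeometricEnvelope

section SingleCrossing

lemma mul_add_mul_le_of_le_of_le {a b c d : ℝ≥0∞} (hab : a ≤ b) (hcd : c ≤ d) :
    a * d + b * c ≤ a * c + b * d := by
  obtain ⟨e, rfl⟩ := exists_add_of_le hcd
  rw [mul_add, mul_add, add_right_comm, ← add_assoc]
  gcongr

-- Integrate `0 ≤ (h - g) * (w - c)`.
lemma mul_lintegral_le_of_crossing {X : Type*} [MeasurableSpace X] {ρ : Measure X} {c : ℝ≥0∞}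
    {g h w : X → ℝ≥0∞} (hc : c ≠ ∞) (hg : Measurable g) (hh : Measurable h)
    (hcross : ∀ x, w x ≤ c ∧ h x ≤ g x ∨ c ≤ w x ∧ g x ≤ h x) (hfin : ∫⁻ x, g x ∂ρ ≠ ∞)
    (hgc : c * ∫⁻ x, g x ∂ρ ≤ ∫⁻ x, g x * w x ∂ρ) :
    c * ∫⁻ x, h x ∂ρ ≤ ∫⁻ x, h x * w x ∂ρ := by
  have hpoint : ∀ x, g x * w x + h x * c ≤ g x * c + h x * w x := fun x ↦ by
    obtain ⟨hw, hhg⟩ | ⟨hw, hgh⟩ := hcross x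
    · simpa only [add_comm] using mul_add_mul_le_of_le_of_le hhg hw
    · exact mul_add_mul_le_of_le_of_le hgh hw
  refine (ENNReal.add_le_add_iff_left (ENNReal.mul_ne_top hc hfin)).1 ?_
  calc c * ∫⁻ x, g x ∂ρ + c * ∫⁻ x, h x ∂ρ
      ≤ ∫⁻ x, g x * w x ∂ρ + ∫⁻ x, h x * c ∂ρ := by
        rw [lintegral_mul_const c hh, mul_comm c (∫⁻ x, h x ∂ρ)]
        gcongr
    _ = ∫⁻ x, (g x * w x + h x * c) ∂ρ := (lintegral_add_right _ (hh.mul_const c)).symm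
    _ ≤ ∫⁻ x, (g x * c + h x * w x) ∂ρ := lintegral_mono hpoint
    _ = c * ∫⁻ x, g x ∂ρ + ∫⁻ x, h x * w x ∂ρ := by
      rw [lintegral_add_left (hg.mul_const c), lintegral_mul_const c hg, mul_comm]

lemma IsCostRatioBound.mul_lintegral_le_of_isDPDensity {K : ℝ≥0∞} {Δ lam : ℝ} {ρ : Measure ℝ}
    [NullSingletonClass ρ] (hρ : ∀ᵐ r ∂ρ, 0 < r) (hρ_fin : ρ (Iio lam) ≠ ∞) (hK₁ : 1 ≤ K)
    (hK : K ≠ ∞) (hΔ : 0 < Δ) (hc : IsCostRatioBound K Δ ρ (ENNReal.ofReal lam))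
    {h : ℝ → ℝ≥0∞} (hhm : Measurable h) (hh : IsDPDensity K Δ h) (hlam : h lam ≠ ∞)
    (hfin : ∫⁻ r, h r ∂ρ ≠ ∞) :
    ENNReal.ofReal lam * ∫⁻ r, h r ∂ρ ≤ ∫⁻ r, h r * ENNReal.ofReal r ∂ρ := by
  have hK₀ : K ≠ 0 := (zero_lt_one.trans_le hK₁).ne'
  set G := geometricEnvelope K hΔ lam h
  have hG : Antitone G := antitone_geometricEnvelope hK₁ hK hΔ hh lam
  have hleft : ∀ r < lam, h r ≤ G r := fun r hr ↦ hh.le_geometricEnvelope hΔ hr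
  have hright : ∀ r, lam ≤ r → G r ≤ h r := fun r hr ↦ hh.geometricEnvelope_le hK₀ hK hΔ hr
  have hGfin : ∫⁻ r, G r ∂ρ ≠ ∞ := by
    have hnear : ∫⁻ r in Iio lam, G r ∂ρ ≤ G 0 * ρ (Iio lam) := by
      rw [← setLIntegral_const]
      refine lintegral_mono_ae ?_
      filter_upwards [ae_restrict_of_ae hρ] with r hr using hG hr.le
    have hfar : ∫⁻ r in (Iio lam)ᶜ, G r ∂ρ ≤ ∫⁻ r, h r ∂ρ :=
      (setLIntegral_mono hhm fun r hr ↦ hright r (not_lt.1 hr)).trans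
        (setLIntegral_le_lintegral _ h)
    rw [← lintegral_add_compl G measurableSet_Iio]
    exact ENNReal.add_ne_top.2 ⟨ne_top_of_le_ne_top (ENNReal.mul_ne_top
      (hh.geometricEnvelope_ne_top hK₀ hK hΔ hlam 0) hρ_fin) hnear, ne_top_of_le_ne_top hfin hfar⟩
  refine mul_lintegral_le_of_crossing ENNReal.ofReal_ne_top hG.measurable hhm (fun r ↦ ?_) hGfin
    (hc.mul_lintegral_le_of_hasDecay hρ hΔ hG (hasDecay_geometricExtension hK₀ hK hΔ _ _) hGfin)
  rcases lt_or_ge r lam with hr | hr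
  · exact Or.inl ⟨ENNReal.ofReal_le_ofReal hr.le, hleft r hr⟩
  · exact Or.inr ⟨ENNReal.ofReal_le_ofReal hr, hright r hr⟩

end SingleCrossing

section SphericalMean

variable {E : Type*} [NormedAddCommGroup E] [NormedSpace ℝ E] [MeasurableSpace E]
  {ν : Measure E} {K : ℝ≥0∞} {Δ : ℝ} {f : E → ℝ≥0∞}

/-- The mean of `f` over the sphere of radius `r`, as a function of `r`; the unit sphere carries
the surface measure induced by `ν`. -/
def sphericalMean (ν : Measure E) (f : E → ℝ≥0∞) (r : ℝ) : ℝ≥0∞ :=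
  ⨍⁻ u : sphere (0 : E) 1, f (r • u.1) ∂ν.toSphere

lemma IsDPDensity.isDPDensity_sphericalMean (hf : IsDPDensity K Δ f) (hK : K ≠ ∞) :
    IsDPDensity K Δ (sphericalMean ν f) := fun r s hrs ↦ by
  rw [sphericalMean, sphericalMean, laverage, laverage, ← lintegral_const_mul' _ _ hK]
  refine lintegral_mono fun u ↦ hf _ _ ?_
  rwa [dist_eq_norm, ← sub_smul, norm_smul, norm_eq_of_mem_sphere, mul_one, ← dist_eq_norm]

variable [BorelSpace E] [FiniteDimensional ℝ E] [ν.IsAddHaarMeasure]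

lemma measurable_sphericalMean (hf : Measurable f) : Measurable (sphericalMean ν f) := by
  unfold sphericalMean laverage
  refine Measurable.lintegral_prod_right' (f := fun p : ℝ × sphere (0 : E) 1 ↦ f (p.1 • p.2.1)) ?_
  exact hf.comp (measurable_fst.smul (measurable_subtype_coe.comp measurable_snd))

lemma map_norm_Iio_ne_top (ν : Measure E) [ν.IsAddHaarMeasure] (r : ℝ) :
    ν.map norm (Iio r) ≠ ∞ := by
  have hball : norm ⁻¹' Iio r = ball (0 : E) r := by ext; simp
  rw [Measure.map_apply measurable_norm measurableSet_Iio, hball]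
  exact measure_ball_lt_top.ne

variable [Nontrivial E]

instance nullSingletonClass_map_norm : NullSingletonClass (ν.map norm) where
  measure_singleton r := by
    have hsphere : norm ⁻¹' {r} = sphere (0 : E) r := by ext; simp
    rw [Measure.map_apply measurable_norm (measurableSet_singleton r), hsphere]
    exact Measure.addHaar_sphere ν 0 r

lemma ae_map_norm_pos : ∀ᵐ r ∂ν.map norm, 0 < r := by
  rw [ae_map_iff measurable_norm.aemeasurable measurableSet_Ioi]
  filter_upwards [Measure.ae_ne ν 0] with x hx using norm_pos_iff.2 hx

lemma IsDPDensity.sphericalMean_ne_top (hK : K ≠ ∞) (hΔ : 0 < Δ) (hf : IsDPDensity K Δ f)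
    (hfm : Measurable f) (hfin : ∫⁻ x, f x ∂ν ≠ ∞) (r : ℝ) : sphericalMean ν f r ≠ ∞ := by
  have hball : ν (closedBall 0 Δ) ≠ 0 := (measure_closedBall_pos ν 0 hΔ).ne'
  have hle : ∀ x, f x ≤ (K * ∫⁻ y, f y ∂ν) / ν (closedBall 0 Δ) := fun x ↦ by
    rw [ENNReal.le_div_iff_mul_le (Or.inl hball) (Or.inl measure_closedBall_lt_top.ne),
      ← Measure.addHaar_closedBall_center ν x]
    exact hf.mul_measure_closedBall_le hfm ν x
  have : NeZero ν.toSphere := ⟨ν.toSphere_ne_zero⟩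
  refine ne_top_of_le_ne_top (ENNReal.div_ne_top (ENNReal.mul_ne_top hK hfin) hball) ?_
  calc sphericalMean ν f r
      ≤ ⨍⁻ _ : sphere (0 : E) 1, (K * ∫⁻ y, f y ∂ν) / ν (closedBall 0 Δ) ∂ν.toSphere :=
        lintegral_mono fun u ↦ hle _
    _ = (K * ∫⁻ y, f y ∂ν) / ν (closedBall 0 Δ) := laverage_const _ _

lemma lintegral_polar (ν : Measure E) [ν.IsAddHaarMeasure] {F : E → ℝ≥0∞} (hF : Measurable F) :
    ∫⁻ x, F x ∂ν = ∫⁻ r : Ioi (0 : ℝ), ∫⁻ u : sphere (0 : E) 1, F (r.1 • u.1) ∂ν.toSphere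
      ∂Measure.volumeIoiPow (Module.finrank ℝ E - 1) := by
  have hjoint : Measurable fun p : sphere (0 : E) 1 × Ioi (0 : ℝ) ↦ F (p.2.1 • p.1.1) :=
    hF.comp ((measurable_subtype_coe.comp measurable_snd).smul
      (measurable_subtype_coe.comp measurable_fst))
  calc ∫⁻ x, F x ∂ν
      = ∫⁻ x : ({0}ᶜ : Set E), F x ∂ν.comap (↑) := by
        rw [lintegral_subtype_comap (measurableSet_singleton _).compl, restrict_compl_singleton]
    _ = ∫⁻ x : ({0}ᶜ : Set E), F ((homeomorphUnitSphereProd E x).2.1 •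
          (homeomorphUnitSphereProd E x).1.1) ∂ν.comap (↑) := by
        refine lintegral_congr fun x ↦ ?_
        rw [homeomorphUnitSphereProd_apply_snd_coe, homeomorphUnitSphereProd_apply_fst_coe,
          smul_inv_smul₀ (norm_ne_zero_iff.2 x.2)]
    _ = ∫⁻ p, F (p.2.1 • p.1.1)
          ∂ν.toSphere.prod (Measure.volumeIoiPow (Module.finrank ℝ E - 1)) :=
        ν.measurePreserving_homeomorphUnitSphereProd.lintegral_comp_emb
          (Homeomorph.measurableEmbedding _) fun p ↦ F (p.2.1 • p.1.1)
    _ = _ := lintegral_prod_symm' _ hjoint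

lemma lintegral_mul_norm (hf : Measurable f) {φ : ℝ → ℝ≥0∞} (hφ : Measurable φ) :
    ∫⁻ x, f x * φ ‖x‖ ∂ν = ∫⁻ r, sphericalMean ν f r * φ r ∂ν.map norm := by
  have hnorm : ∀ (r : Ioi (0 : ℝ)) (u : sphere (0 : E) 1), ‖r.1 • u.1‖ = r := fun r u ↦ by
    rw [norm_smul, norm_eq_of_mem_sphere, mul_one, Real.norm_of_nonneg (le_of_lt r.2)]
  have hmean : Measurable fun r ↦ sphericalMean ν f r * φ r := (measurable_sphericalMean hf).mul hφ
  have hprod : Measurable fun x ↦ f x * φ ‖x‖ := hf.mul (hφ.comp measurable_norm)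
  rw [lintegral_map hmean measurable_norm, lintegral_polar ν hprod,
    lintegral_polar ν (F := fun x ↦ sphericalMean ν f ‖x‖ * φ ‖x‖) (hmean.comp measurable_norm)]
  refine lintegral_congr fun r ↦ ?_
  have hslice : Measurable fun u : sphere (0 : E) 1 ↦ f (r.1 • u.1) :=
    hf.comp (measurable_subtype_coe.const_smul r.1)
  simp only [hnorm]
  rw [lintegral_mul_const _ hslice, lintegral_const, ← measure_mul_laverage, sphericalMean]
  ring

theorem IsCostRatioBound.mul_lintegral_le_lintegral_mul_norm (hK₁ : 1 ≤ K) (hK : K ≠ ∞)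
    (hΔ : 0 < Δ) {c : ℝ≥0∞} (hc_top : c ≠ ∞) (hc : IsCostRatioBound K Δ (ν.map norm) c)
    (hfm : Measurable f) (hf : IsDPDensity K Δ f) (hfin : ∫⁻ x, f x ∂ν ≠ ∞) :
    c * ∫⁻ x, f x ∂ν ≤ ∫⁻ x, f x * ENNReal.ofReal ‖x‖ ∂ν := by
  have hmass : ∫⁻ x, f x ∂ν = ∫⁻ r, sphericalMean ν f r ∂ν.map norm := by
    simpa only [mul_one] using lintegral_mul_norm (ν := ν) hfm (measurable_const (a := 1))
  lift c to NNReal using hc_top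
  rw [← ENNReal.ofReal_coe_nnreal] at hc ⊢
  rw [hmass, lintegral_mul_norm hfm ENNReal.measurable_ofReal]
  exact hc.mul_lintegral_le_of_isDPDensity ae_map_norm_pos (map_norm_Iio_ne_top ν _) hK₁ hK hΔ
    (measurable_sphericalMean hfm) (hf.isDPDensity_sphericalMean hK)
    (hf.sphericalMean_ne_top hK hΔ hfm hfin _) (hmass ▸ hfin)

end SphericalMean

section DPNoise

lemma IsCandidateSeq.isDPDensity_layer {E : Type*} [NormedAddCommGroup E] {K : ℝ≥0∞} {i : ℕ}
    {a : ℕ → ℝ≥0∞} (ha : IsCandidateSeq K i a) {Δ : ℝ} (hΔ : 0 < Δ) :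
    IsDPDensity K Δ fun x : E ↦ a (layer Δ i ‖x‖) := fun x y hxy ↦ by
  have hlayer : layer Δ i ‖y‖ ≤ layer Δ i ‖x‖ + i := by
    rw [← layer_add hΔ i (norm_nonneg x)]
    exact monotone_layer hΔ i (norm_le_norm_add_const_of_dist_le (dist_comm x y ▸ hxy))
  calc a (layer Δ i ‖x‖) = K * a (layer Δ i ‖x‖ + i) := ha.hasDecay _
    _ ≤ K * a (layer Δ i ‖y‖) := by gcongr; exact ha.antitone hlayer

variable {E : Type*} [NormedAddCommGroup E] [MeasurableSpace E]
  {K : ℝ≥0∞} {Δ : ℝ} {μ ν : Measure E}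

/-- Probability measures satisfying the `ε`-differential-privacy constraint with sensitivity `Δ`
in the norm of `E`, where `K = e^ε`; for the `ℓ¹` plane this is the class `𝒫`. -/
structure IsDPNoise (K : ℝ≥0∞) (Δ : ℝ) (μ : Measure E) : Prop where
  isProbabilityMeasure : IsProbabilityMeasure μ
  le_mul_image_add_right : ∀ S, MeasurableSet S → ∀ t, ‖t‖ ≤ Δ → μ S ≤ K * μ ((· + t) '' S)

/-- The class `𝒫_i^{(c)}` for the norm of `E`; the layers carry densities with respect to `ν`. -/
structure IsCandidateNoise (K : ℝ≥0∞) (Δ : ℝ) (ν : Measure E) (i : ℕ) (μ : Measure E) : Prop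
    extends IsDPNoise K Δ μ where
  exists_density : ∃ a, IsCandidateSeq K i a ∧ μ = ν.withDensity fun x ↦ a (layer Δ i ‖x‖)

lemma IsDPDensity.isDPNoise_withDensity [MeasurableAdd E] [ν.IsAddRightInvariant]
    {f : E → ℝ≥0∞} (hf : IsDPDensity K Δ f) (hfm : Measurable f) (hmass : ∫⁻ x, f x ∂ν = 1) :
    IsDPNoise K Δ (ν.withDensity f) where
  isProbabilityMeasure := ⟨by rw [withDensity_apply _ .univ, setLIntegral_univ, hmass]⟩
  le_mul_image_add_right S hS t ht := by
    have hemb : MeasurableEmbedding (· + t) := measurableEmbedding_addRight t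
    rw [withDensity_apply _ hS, withDensity_apply _ (hemb.measurableSet_image.2 hS),
      ← (measurePreserving_add_right ν t).setLIntegral_comp_emb hemb,
      ← lintegral_const_mul K (f := fun x ↦ f (x + t)) (hfm.comp hemb.measurable)]
    refine lintegral_mono fun x ↦ hf x (x + t) ?_
    rwa [dist_self_add_right]

lemma isCostRatioBound_of_forall_le [BorelSpace E] [SecondCountableTopology E]
    [ν.IsAddRightInvariant] (hΔ : 0 < Δ) {c : ℝ≥0∞}
    (hc : ∀ i, 3 ≤ i → ∀ μ, IsCandidateNoise K Δ ν i μ → c ≤ ∫⁻ x, ENNReal.ofReal ‖x‖ ∂μ) :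
    IsCostRatioBound K Δ (ν.map norm) c := fun i hi a ha hfin ↦ by
  set p := fun x : E ↦ a (layer Δ i ‖x‖)
  have hpm : Measurable p := (measurable_comp_layer Δ i a).comp measurable_norm
  have hcost : Measurable fun x : E ↦ ENNReal.ofReal ‖x‖ := measurable_norm.ennreal_ofReal
  rw [lintegral_map (measurable_comp_layer Δ i a) measurable_norm] at hfin ⊢
  rw [lintegral_map (f := fun r ↦ a (layer Δ i r) * ENNReal.ofReal r)
    ((measurable_comp_layer Δ i a).mul ENNReal.measurable_ofReal) measurable_norm]
  set M := ∫⁻ x, p x ∂ν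
  obtain hM | hM := eq_or_ne M 0
  · rw [hM, mul_zero]
    exact zero_le
  have hnormalised : ∫⁻ x, M⁻¹ * p x ∂ν = 1 := by
    rw [lintegral_const_mul _ hpm, ENNReal.inv_mul_cancel hM hfin]
  have hmem : IsCandidateNoise K Δ ν i (ν.withDensity fun x ↦ M⁻¹ * p x) :=
    ⟨((ha.const_mul M⁻¹).isDPDensity_layer hΔ).isDPNoise_withDensity (hpm.const_mul _) hnormalised,
      _, ha.const_mul M⁻¹, rfl⟩
  rw [← ENNReal.le_div_iff_mul_le (Or.inl hM) (Or.inl hfin)]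
  calc c ≤ ∫⁻ x, ENNReal.ofReal ‖x‖ ∂ν.withDensity fun x ↦ M⁻¹ * p x := hc i hi _ hmem
    _ = ∫⁻ x, M⁻¹ * (p x * ENNReal.ofReal ‖x‖) ∂ν := by
      rw [lintegral_withDensity_eq_lintegral_mul _ (hpm.const_mul _) hcost]
      simp only [Pi.mul_apply, mul_assoc]
    _ = (∫⁻ x, p x * ENNReal.ofReal ‖x‖ ∂ν) / M := by
      rw [lintegral_const_mul' _ _ (ENNReal.inv_ne_top.2 hM), mul_comm, div_eq_mul_inv]

end DPNoise

section Smoothing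

lemma lintegral_measure_closedBall_mul {X : Type*} [PseudoMetricSpace X] [MeasurableSpace X]
    [OpensMeasurableSpace X] [SecondCountableTopology X] (μ ν : Measure X) [SFinite μ] [SFinite ν]
    (η : ℝ) {φ : X → ℝ≥0∞} (hφ : Measurable φ) :
    ∫⁻ x, μ (closedBall x η) * φ x ∂ν = ∫⁻ y, ∫⁻ x in closedBall y η, φ x ∂ν ∂μ := by
  have hD : MeasurableSet {p : X × X | dist p.2 p.1 ≤ η} :=
    (isClosed_le (continuous_snd.dist continuous_fst) continuous_const).measurableSet
  have hjoint : Measurable fun p : X × X ↦ (closedBall p.1 η).indicator (fun _ ↦ φ p.1) p.2 :=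
    (hφ.comp measurable_fst).indicator hD
  calc ∫⁻ x, μ (closedBall x η) * φ x ∂ν
      = ∫⁻ x, ∫⁻ y, (closedBall x η).indicator (fun _ ↦ φ x) y ∂μ ∂ν := by
        simp only [lintegral_indicator_const measurableSet_closedBall, mul_comm]
    _ = ∫⁻ y, ∫⁻ x, (closedBall x η).indicator (fun _ ↦ φ x) y ∂ν ∂μ :=
        lintegral_lintegral_swap hjoint.aemeasurable
    _ = ∫⁻ y, ∫⁻ x in closedBall y η, φ x ∂ν ∂μ := by
        simp only [← lintegral_indicator measurableSet_closedBall, indicator, mem_closedBall,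
          dist_comm]

variable {E : Type*} [NormedAddCommGroup E] [MeasurableSpace E]
  {K : ℝ≥0∞} {Δ η : ℝ} {μ ν : Measure E}

/-- The density with respect to `ν` of the sum of `μ` and an independent uniform noise on the ball
of radius `η`. -/
def smoothedDensity (ν μ : Measure E) (η : ℝ) (x : E) : ℝ≥0∞ :=
  (ν (closedBall 0 η))⁻¹ * μ (closedBall x η)

lemma IsDPNoise.isDPDensity_smoothedDensity [OpensMeasurableSpace E] (hμ : IsDPNoise K Δ μ) :
    IsDPDensity K Δ (smoothedDensity ν μ η) := fun x y hxy ↦ by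
  have himage : (· + (y - x)) '' closedBall x η = closedBall y η := by simp
  have hdp := hμ.le_mul_image_add_right (closedBall x η) measurableSet_closedBall (y - x)
    (by rwa [← dist_eq_norm, dist_comm])
  rw [smoothedDensity, smoothedDensity, mul_left_comm]
  gcongr
  rwa [himage] at hdp

lemma measurable_smoothedDensity [OpensMeasurableSpace E] [SecondCountableTopology E]
    [SFinite μ] : Measurable (smoothedDensity ν μ η) := by
  have hD : MeasurableSet {p : E × E | dist p.2 p.1 ≤ η} :=
    (isClosed_le (continuous_snd.dist continuous_fst) continuous_const).measurableSet
  exact (measurable_measure_prodMk_left hD).const_mul _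

variable [NormedSpace ℝ E] [FiniteDimensional ℝ E] [BorelSpace E] [ν.IsAddHaarMeasure]

lemma lintegral_smoothedDensity_mul [SFinite μ] (hη : 0 < η) {φ : E → ℝ≥0∞} (hφ : Measurable φ) :
    ∫⁻ x, smoothedDensity ν μ η x * φ x ∂ν = ∫⁻ y, ⨍⁻ x in closedBall y η, φ x ∂ν ∂μ := by
  have : ProperSpace E := FiniteDimensional.proper ℝ E
  have hinv : (ν (closedBall 0 η))⁻¹ ≠ ∞ :=
    ENNReal.inv_ne_top.2 (measure_closedBall_pos ν 0 hη).ne'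
  simp only [smoothedDensity, mul_assoc, setLAverage_eq, Measure.addHaar_closedBall_center,
    div_eq_mul_inv]
  rw [lintegral_const_mul' _ _ hinv, lintegral_measure_closedBall_mul μ ν η hφ,
    lintegral_mul_const' _ _ hinv, mul_comm]

lemma lintegral_smoothedDensity [IsProbabilityMeasure μ] (hη : 0 < η) :
    ∫⁻ x, smoothedDensity ν μ η x ∂ν = 1 := by
  have hmean : ∀ y, ⨍⁻ _ in closedBall y η, (1 : ℝ≥0∞) ∂ν = 1 := fun y ↦
    setLAverage_one (measure_closedBall_pos ν y hη).ne' measure_closedBall_lt_top.ne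
  simpa only [mul_one, hmean, lintegral_one, measure_univ] using
    lintegral_smoothedDensity_mul (ν := ν) (μ := μ) hη (measurable_const (a := 1))

lemma lintegral_smoothedDensity_mul_norm_le [IsProbabilityMeasure μ] (hη : 0 < η) :
    ∫⁻ x, smoothedDensity ν μ η x * ENNReal.ofReal ‖x‖ ∂ν ≤
      ∫⁻ y, ENNReal.ofReal ‖y‖ ∂μ + ENNReal.ofReal η := by
  rw [lintegral_smoothedDensity_mul hη measurable_norm.ennreal_ofReal]
  have hmean : ∀ y, ⨍⁻ x in closedBall y η, ENNReal.ofReal ‖x‖ ∂ν ≤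
      ENNReal.ofReal ‖y‖ + ENNReal.ofReal η := fun y ↦ by
    have hle : ∀ x ∈ closedBall y η, ENNReal.ofReal ‖x‖ ≤ ENNReal.ofReal ‖y‖ + ENNReal.ofReal η :=
      fun x hx ↦ (ENNReal.ofReal_le_ofReal (norm_le_norm_add_const_of_dist_le hx)).trans
        ENNReal.ofReal_add_le
    rw [← setLAverage_const (measure_closedBall_pos ν y hη).ne' measure_closedBall_lt_top.ne
      (ENNReal.ofReal ‖y‖ + ENNReal.ofReal η)]
    exact laverage_mono_ae ((ae_restrict_iff' measurableSet_closedBall).2 (.of_forall hle))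
  calc _ ≤ ∫⁻ y, (ENNReal.ofReal ‖y‖ + ENNReal.ofReal η) ∂μ := lintegral_mono hmean
    _ = ∫⁻ y, ENNReal.ofReal ‖y‖ ∂μ + ENNReal.ofReal η := by
      rw [lintegral_add_right _ measurable_const, lintegral_const, measure_univ, mul_one]

variable [Nontrivial E]

theorem IsCostRatioBound.le_lintegral_norm (hK₁ : 1 ≤ K) (hK : K ≠ ∞) (hΔ : 0 < Δ) {c : ℝ≥0∞}
    (hc : IsCostRatioBound K Δ (ν.map norm) c) (hμ : IsDPNoise K Δ μ) :
    c ≤ ∫⁻ x, ENNReal.ofReal ‖x‖ ∂μ := by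
  have := hμ.isProbabilityMeasure
  refine ENNReal.le_of_forall_nnreal_lt fun b hb ↦ ENNReal.le_of_forall_pos_le_add fun η hη _ ↦ ?_
  have hη_pos : 0 < (η : ℝ) := NNReal.coe_pos.2 hη
  have hmass : ∫⁻ x, smoothedDensity ν μ η x ∂ν = 1 := lintegral_smoothedDensity hη_pos
  calc (b : ℝ≥0∞)
      = b * ∫⁻ x, smoothedDensity ν μ η x ∂ν := by rw [hmass, mul_one]
    _ ≤ ∫⁻ x, smoothedDensity ν μ η x * ENNReal.ofReal ‖x‖ ∂ν :=
        (hc.mono hb.le).mul_lintegral_le_lintegral_mul_norm hK₁ hK hΔ ENNReal.coe_ne_top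
          measurable_smoothedDensity hμ.isDPDensity_smoothedDensity (hmass ▸ ENNReal.one_ne_top)
    _ ≤ ∫⁻ x, ENNReal.ofReal ‖x‖ ∂μ + η :=
        (lintegral_smoothedDensity_mul_norm_le hη_pos).trans_eq (by rw [ENNReal.ofReal_coe_nnreal])

end Smoothing

section LOnePlane

lemma map_withDensity_comp {X Y : Type*} [MeasurableSpace X] [MeasurableSpace Y] (e : X ≃ᵐ Y)
    (ν : Measure X) (g : Y → ℝ≥0∞) : (ν.withDensity (g ∘ e)).map e = (ν.map e).withDensity g := by
  ext S hS
  rw [e.map_apply, withDensity_apply _ (e.measurable hS), withDensity_apply _ hS,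
    e.restrict_map, lintegral_map_equiv]
  rfl

/-- The identification of `ℝ²` with the plane whose norm is the `ℓ¹` norm. -/
abbrev toLOne : ℝ × ℝ ≃ᵐ WithLp 1 (ℝ × ℝ) := MeasurableEquiv.toLp 1 (ℝ × ℝ)

lemma norm_toLOne (x : ℝ × ℝ) : ‖toLOne x‖ = l1 x := by
  rw [WithLp.prod_norm_eq_of_L1]
  rfl

instance isAddHaarMeasure_map_toLOne :
    ((volume : Measure (ℝ × ℝ)).map toLOne).IsAddHaarMeasure :=
  (WithLp.prodContinuousLinearEquiv 1 ℝ ℝ ℝ).symm.isAddHaarMeasure_map volume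

variable {ε Δ : ℝ} {i : ℕ} {μ : Measure (ℝ × ℝ)}

lemma cost_eq_lintegral_norm : cost μ = ∫⁻ x, ENNReal.ofReal ‖x‖ ∂μ.map toLOne := by
  simp only [lintegral_map_equiv, norm_toLOne, cost]

lemma memP_iff_isDPNoise :
    MemP ε Δ μ ↔ IsDPNoise (ENNReal.ofReal (exp ε)) Δ (μ.map toLOne) := by
  have himage : ∀ T t, toLOne ⁻¹' ((· + toLOne t) '' T) = (· + t) '' (toLOne ⁻¹' T) :=
    fun T t ↦ by
      rw [image_add_right, image_add_right]
      rfl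
  constructor
  · rintro ⟨hprob, hdp⟩
    refine ⟨Measure.isProbabilityMeasure_map toLOne.measurable.aemeasurable, fun T hT ↦
      toLOne.surjective.forall.2 fun t ht ↦ ?_⟩
    rw [toLOne.map_apply, toLOne.map_apply, himage]
    exact hdp _ (toLOne.measurable hT) t (norm_toLOne t ▸ ht)
  · rintro ⟨hprob, hdp⟩
    refine ⟨(Measure.isProbabilityMeasure_map_iff toLOne.measurable.aemeasurable).1 hprob,
      fun S hS t ht ↦ ?_⟩
    have hdp_t := hdp _ (toLOne.symm.measurable hS) (toLOne t) ((norm_toLOne t).trans_le ht)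
    rwa [toLOne.map_apply, toLOne.map_apply, himage, toLOne.preimage_symm,
      preimage_image_eq S toLOne.injective] at hdp_t

lemma memPc_iff_isCandidateNoise :
    MemPc ε Δ i μ ↔ IsCandidateNoise (ENNReal.ofReal (exp ε)) Δ
      ((volume : Measure (ℝ × ℝ)).map toLOne) i (μ.map toLOne) := by
  have hdensity : ∀ a, HasDensitySeq Δ i μ a ↔
      μ.map toLOne = (volume.map toLOne).withDensity fun x ↦ a (layer Δ i ‖x‖) := fun a ↦ by
    rw [← map_withDensity_comp, toLOne.map_measurableEquiv_injective.eq_iff]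
    simp only [Function.comp_def, norm_toLOne]
    rfl
  constructor
  · rintro ⟨hP, a, ha, hanti, hdecay, hzero, -⟩
    exact ⟨memP_iff_isDPNoise.1 hP, a, ⟨hanti, hdecay, hzero⟩, (hdensity a).1 ha⟩
  · rintro ⟨hP, a, ⟨hanti, hdecay, hzero⟩, ha⟩
    refine ⟨memP_iff_isDPNoise.2 hP, a, (hdensity a).2 ha, hanti, hdecay, hzero, 0, zero_le, ?_⟩
    intro j hj
    rw [Nat.le_zero.1 hj]

lemma iInf_cost_eq {P : Measure (ℝ × ℝ) → Prop} {Q : Measure (WithLp 1 (ℝ × ℝ)) → Prop}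
    (h : ∀ μ, P μ ↔ Q (μ.map toLOne)) :
    (⨅ (μ : Measure (ℝ × ℝ)) (_ : P μ), cost μ) =
      ⨅ (μ : Measure (WithLp 1 (ℝ × ℝ))) (_ : Q μ), ∫⁻ x, ENNReal.ofReal ‖x‖ ∂μ :=
  Function.Surjective.iInf_congr (Measure.map toLOne)
    (fun μ ↦ ⟨μ.map toLOne.symm, toLOne.map_map_symm⟩)
    fun μ ↦ by simp only [h, cost_eq_lintegral_norm]

end LOnePlane

theorem Vstar_eq_inf_Pc_general {E : Type*} [NormedAddCommGroup E] [NormedSpace ℝ E]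
    [FiniteDimensional ℝ E] [Nontrivial E] [MeasurableSpace E] [BorelSpace E] (ν : Measure E)
    [ν.IsAddHaarMeasure] {K : ℝ≥0∞} (hK₁ : 1 ≤ K) (hK : K ≠ ∞) {Δ : ℝ} (hΔ : 0 < Δ) :
    (⨅ (μ : Measure E) (_ : IsDPNoise K Δ μ), ∫⁻ x, ENNReal.ofReal ‖x‖ ∂μ) =
      ⨅ (μ : Measure E) (_ : ∃ i, 3 ≤ i ∧ IsCandidateNoise K Δ ν i μ),
        ∫⁻ x, ENNReal.ofReal ‖x‖ ∂μ := by
  refine le_antisymm (le_iInf₂ fun μ ⟨_, _, hμ⟩ ↦ iInf₂_le μ hμ.toIsDPNoise)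
    (le_iInf₂ fun μ hμ ↦ IsCostRatioBound.le_lintegral_norm (ν := ν) hK₁ hK hΔ ?_ hμ)
  exact isCostRatioBound_of_forall_le (ν := ν) hΔ fun i hi μ hμ ↦ iInf₂_le μ ⟨i, hi, hμ⟩

/-- Lemma 7: the optimal cost V* equals the infimum over measures in 𝒫_i^{(c)},
i ≥ 3, i.e. measures in 𝒫_i^{(b)} whose density sequence additionally satisfies
a₀ = e^ε · a_{i−1} and a₀ = a₁ = ⋯ = a_k for some 0 ≤ k ≤ i−2. -/
theorem Vstar_eq_inf_Pc (ε Δ : ℝ) (hε : 0 < ε) (hΔ : 0 < Δ) :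
    (⨅ (μ : Measure (ℝ × ℝ)) (_ : MemP ε Δ μ), cost μ) =
    ⨅ (μ : Measure (ℝ × ℝ)) (_ : ∃ i : ℕ, 3 ≤ i ∧ MemPc ε Δ i μ), cost μ := by
  have : Nontrivial (WithLp 1 (ℝ × ℝ)) := toLOne.symm.toEquiv.nontrivial
  refine (iInf_cost_eq fun _ ↦ memP_iff_isDPNoise).trans <| (Vstar_eq_inf_Pc_general
    (volume.map toLOne) (ENNReal.one_le_ofReal.2 (one_le_exp hε.le)) ENNReal.ofReal_ne_top hΔ).trans
      (iInf_cost_eq fun _ ↦ ?_).symm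
  simp only [memPc_iff_isCandidateNoise]
end
end
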